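/- In the nonlinear setting with standing conditions (N1)–(N5): lim_{n→∞} H_{h_n}(J_n) = 1. -/

import Mathlib

open Set Filter MeasureTheory Topology

noncomputable section

/-- Composition `g_{i₁} ∘ g_{i₂} ∘ ⋯ ∘ g_{i_l}` along a finite word. -/
def wordComp (g : ℕ → ℝ → ℝ) : List ℕ → ℝ → ℝ
  | [] => id
  | k :: w => g k ∘ wordComp g w

/-- The limit set `J_n` of the IFS `S_n = {g_1, …, g_n}`. -/
def limitSet (g : ℕ → ℝ → ℝ) (n : ℕ) : Set ℝ :=
  ⋂ l : ℕ, ⋃ w ∈ {w : List ℕ | w.length = l + 1 ∧ ∀ i ∈ w, 1 ≤ i ∧ i ≤ n},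
    wordComp g w '' Set.Icc (0 : ℝ) 1

/-- The distortion `κ(g) = sup_{x,y ∈ [0,1]} |g′(y)|/|g′(x)|` of a map with derivative `f'`. -/
def distortion (f' : ℝ → ℝ) : ℝ :=
  ⨆ x ∈ Set.Icc (0 : ℝ) 1, ⨆ y ∈ Set.Icc (0 : ℝ) 1, |f' y| / |f' x|

/-- The nonlinear setting of the paper: a strictly decreasing sequence `b_k → 0` with `b_0 = 1`,
    decreasing `C²` diffeomorphisms `g_k : [0,1] → [b_k, b_{k-1}]` (with first and second
    derivatives `g'` and `g''`), the Hausdorff dimensions `h_n` of the limit sets `J_n`, and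
    the standing conditions (N1)–(N5). -/
structure NonlinearIFS where
  b : ℕ → ℝ
  g : ℕ → ℝ → ℝ
  g' : ℕ → ℝ → ℝ
  g'' : ℕ → ℝ → ℝ
  h : ℕ → ℝ
  b_zero : b 0 = 1
  b_anti : StrictAnti b
  b_lim : Filter.Tendsto b Filter.atTop (nhds 0)
  g_image : ∀ k, 1 ≤ k → g k '' Set.Icc (0 : ℝ) 1 = Set.Icc (b k) (b (k - 1))
  g_anti : ∀ k, 1 ≤ k → StrictAntiOn (g k) (Set.Icc (0 : ℝ) 1)
  g_zero : ∀ k, 1 ≤ k → g k 0 = b (k - 1)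
  g_one : ∀ k, 1 ≤ k → g k 1 = b k
  deriv1 : ∀ k, 1 ≤ k → ∀ x ∈ Set.Icc (0 : ℝ) 1, HasDerivAt (g k) (g' k x) x
  deriv2 : ∀ k, 1 ≤ k → ∀ x ∈ Set.Icc (0 : ℝ) 1, HasDerivAt (g' k) (g'' k x) x
  deriv_ne : ∀ k, 1 ≤ k → ∀ x ∈ Set.Icc (0 : ℝ) 1, g' k x ≠ 0
  h_dim : ∀ n, 1 ≤ n → dimH (limitSet g n) = ENNReal.ofReal (h n)
  N1 : Filter.Tendsto (fun n : ℕ => (1 - h n) * Real.log n) Filter.atTop (nhds 0)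
  N2 : Filter.Tendsto (fun n : ℕ => ⨆ k ∈ Set.Ici n, b k / b (k + 1)) Filter.atTop (nhds 1)
  N3 : ∃ c : ℝ, 0 < c ∧ ∀ n, 1 ≤ n → ∀ x ∈ Set.Icc (0 : ℝ) 1, |g'' n x / g' n x| < c
  N4 : Filter.Tendsto (fun n : ℕ => distortion (g' n)) Filter.atTop (nhds 1)
  N5 : ∃ α : ℝ, α < 1 ∧ ∀ n, 1 ≤ n → ∀ x ∈ Set.Icc (0 : ℝ) 1, |g' n x| < α

/-- The normalized Hausdorff measure `m_n(A) = H_{h_n}(A ∩ J_n)/H_{h_n}(J_n)`. -/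
def normMeas (S : NonlinearIFS) (n : ℕ) (A : Set ℝ) : ENNReal :=
  μH[S.h n] (A ∩ limitSet S.g n) / μH[S.h n] (limitSet S.g n)

/-!
Write `H n` for the total mass `μH[h_n] (J_n)`. By (N3) and (N5) all the compositions `f_w` have
distortion at most a constant `K`; by (N4) the distortion is close to `1` for words ending in a
large letter, and by (N2) so are the ratios `b_k / b_{k+1}` for large `k`. By (N1) replacing a sum
of at most `n` powers `x_i ^ h_n` by the power of the sum costs a factor tending to `1`.

Upper bound: the mass of `f_w (J_n)`, divided by `|f_w [0,1]| ^ h_n`, is about `H n` for words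
ending in a large letter. Subdividing an arbitrary cylinder once, a fixed proportion of it consists
of such cylinders, so the infimum of these ratios improves towards `H n`. Summing over all
words of a given length, the sum of `|f_w [0,1]| ^ h_n` is at most about `1`, and the cylinders
cover `J_n`.

Lower bound: if the mass of every interval is at most about `H n` times its length to the power
`h_n`, then summing over a nearly optimal cover gives `H n ≤ H n * H n` up to a factor close to `1`.
Such a bound is proved first for images of `[0, s]`, by the same self-improvement; pulling back by
one letter gives it for images of `[s, 1]`, and a general interval, pulled back until it contains
some `b_i`, splits into pieces of these two kinds.
-/

section PowerInequalities

variable {ι : Type*} {x y h : ℝ}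

theorem rpow_le_add_one_sub (hx : 0 ≤ x) (h0 : 0 ≤ h) (h1 : h ≤ 1) : x ^ h ≤ x + (1 - h) := by
  have amgm := Real.geom_mean_le_arith_mean2_weighted h0 (sub_nonneg.2 h1) hx zero_le_one (by ring)
  rw [Real.one_rpow, mul_one, mul_one] at amgm
  nlinarith [mul_nonneg (sub_nonneg.2 h1) hx]

theorem rpow_le_rpow_mul_div_add_one_sub (hx : 0 ≤ x) (hy : 0 < y) (h0 : 0 ≤ h) (h1 : h ≤ 1) :
    x ^ h ≤ y ^ h * (x / y + (1 - h)) := by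
  have hxy : 0 ≤ x / y := div_nonneg hx hy.le
  calc x ^ h = y ^ h * (x / y) ^ h := by
        rw [← Real.mul_rpow hy.le hxy, mul_div_cancel₀ _ hy.ne']
    _ ≤ y ^ h * (x / y + (1 - h)) := by
        gcongr
        exact rpow_le_add_one_sub hxy h0 h1

theorem mul_rpow_add_mul_rpow_le {P A q : ℝ} (hx : 0 ≤ x) (hy : 0 ≤ y) (hxy : 0 < x + y)
    (h0 : 0 ≤ h) (h1 : h ≤ 1) (hP : 0 ≤ P) (hPA : P ≤ A) (hq : q ≤ x / (x + y)) :
    P * x ^ h + A * y ^ h ≤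
      (P * (q + (1 - h)) + A * (1 - q + (1 - h))) * (x + y) ^ h := by
  have hA : 0 ≤ A := hP.trans hPA
  have y_div : y / (x + y) = 1 - x / (x + y) := by field_simp; ring
  calc P * x ^ h + A * y ^ h ≤ P * ((x + y) ^ h * (x / (x + y) + (1 - h))) +
        A * ((x + y) ^ h * (y / (x + y) + (1 - h))) := by
          gcongr
          · exact rpow_le_rpow_mul_div_add_one_sub hx hxy h0 h1
          · exact rpow_le_rpow_mul_div_add_one_sub hy hxy h0 h1
    _ = (P * (x / (x + y) + (1 - h)) + A * (1 - x / (x + y) + (1 - h))) * (x + y) ^ h := by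
          rw [y_div]
          ring
    _ ≤ _ := by
          gcongr ?_ * _
          linarith [mul_nonneg (sub_nonneg.2 hPA) (sub_nonneg.2 hq)]

theorem rpow_mul_div_le_rpow (hx : 0 ≤ x) (hy : 0 < y) (hxy : x ≤ y) (h1 : h ≤ 1) :
    y ^ h * (x / y) ≤ x ^ h := by
  have hdiv : 0 ≤ x / y := div_nonneg hx hy.le
  calc y ^ h * (x / y) ≤ y ^ h * (x / y) ^ h := by
        gcongr
        exact Real.self_le_rpow_of_le_one hdiv ((div_le_one hy).2 hxy) h1
    _ = x ^ h := by rw [← Real.mul_rpow hy.le hdiv, mul_div_cancel₀ _ hy.ne']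

theorem sum_rpow_le_card_rpow_mul_rpow_sum (s : Finset ι) {x : ι → ℝ} (hx : ∀ i ∈ s, 0 ≤ x i)
    (h0 : 0 < h) (h1 : h ≤ 1) :
    ∑ i ∈ s, x i ^ h ≤ (s.card : ℝ) ^ (1 - h) * (∑ i ∈ s, x i) ^ h := by
  have nonneg : 0 ≤ ∑ i ∈ s, x i ^ h := Finset.sum_nonneg fun i hi ↦ Real.rpow_nonneg (hx i hi) _
  have power_mean : (∑ i ∈ s, x i ^ h) ^ (1 / h) ≤ (s.card : ℝ) ^ (1 / h - 1) * ∑ i ∈ s, x i := by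
    have abs_rpow : ∀ i ∈ s, |x i ^ h| = x i ^ h := fun i hi ↦
      abs_of_nonneg (Real.rpow_nonneg (hx i hi) _)
    have rpow_inv : ∀ i ∈ s, |x i ^ h| ^ (1 / h) = x i := fun i hi ↦ by
      rw [abs_rpow i hi, ← Real.rpow_mul (hx i hi), mul_one_div_cancel h0.ne', Real.rpow_one]
    have := Real.rpow_sum_le_const_mul_sum_rpow s (fun i ↦ x i ^ h) ((one_le_div h0).2 h1)
    rwa [Finset.sum_congr rfl abs_rpow, Finset.sum_congr rfl rpow_inv] at this
  calc ∑ i ∈ s, x i ^ h = ((∑ i ∈ s, x i ^ h) ^ (1 / h)) ^ h := by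
        rw [← Real.rpow_mul nonneg, one_div_mul_cancel h0.ne', Real.rpow_one]
    _ ≤ ((s.card : ℝ) ^ (1 / h - 1) * ∑ i ∈ s, x i) ^ h := by gcongr
    _ = (s.card : ℝ) ^ (1 - h) * (∑ i ∈ s, x i) ^ h := by
        rw [Real.mul_rpow (by positivity) (Finset.sum_nonneg hx), ← Real.rpow_mul (by positivity),
          sub_mul, one_div_mul_cancel h0.ne', one_mul]

end PowerInequalities

section SelfImprovement

variable {ι : Type*} {x : ι → ℝ}

theorem le_of_convex_step {a₀ c d q : ℝ} (hq : 0 < q) (hcd : c ≤ d) (hx : ∀ i, a₀ ≤ x i)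
    (step : ∀ a, a₀ ≤ a → a ≤ d → (∀ i, a ≤ x i) → ∀ i, (1 - q) * a + q * c ≤ x i) (i : ι) :
    c ≤ x i := by
  have : Nonempty ι := ⟨i⟩
  have bdd : BddBelow (range x) := ⟨a₀, forall_mem_range.2 hx⟩
  by_contra! lt_c
  have inf_lt : ⨅ j, x j < c := (ciInf_le bdd i).trans_lt lt_c
  have improved : (1 - q) * (⨅ j, x j) + q * c ≤ ⨅ j, x j :=
    le_ciInf (step _ (le_ciInf hx) (inf_lt.le.trans hcd) (ciInf_le bdd))
  nlinarith

theorem le_max_of_affine_step {P B u v : ℝ} (hx : BddAbove (range x)) (hPB : P ≤ B) (hv : v < 1)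
    (step : ∀ A, P ≤ A → (∀ i, x i ≤ A) → ∀ i, x i ≤ max B (u + v * A)) (i : ι) :
    x i ≤ max B (u / (1 - v)) := by
  have : Nonempty ι := ⟨i⟩
  refine (le_ciSup hx i).trans ?_
  by_contra! lt_sup
  obtain ⟨hB, hu⟩ := max_lt_iff.1 lt_sup
  have improved : ⨆ j, x j ≤ max B (u + v * ⨆ j, x j) :=
    ciSup_le (step _ (hPB.trans hB.le) (le_ciSup hx))
  rcases le_max_iff.1 improved with hle | hle
  · exact hle.not_gt hB
  · rw [div_lt_iff₀ (sub_pos.2 hv)] at hu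
    linarith

end SelfImprovement

section MonotoneIncrements

variable {α : Type*} [LinearOrder α] {f : α → ℝ} {s : Set α}

theorem abs_sub_add_abs_sub_of_monotoneOn_or_antitoneOn (hf : MonotoneOn f s ∨ AntitoneOn f s)
    {x y z : α} (hx : x ∈ s) (hy : y ∈ s) (hz : z ∈ s) (hxy : x ≤ y) (hyz : y ≤ z) :
    |f x - f y| + |f y - f z| = |f x - f z| := by
  rcases hf with h | h
  · have fxy := h hx hy hxy
    have fyz := h hy hz hyz
    rw [abs_of_nonpos (by linarith), abs_of_nonpos (by linarith), abs_of_nonpos (by linarith)]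
    ring
  · have fxy := h hx hy hxy
    have fyz := h hy hz hyz
    rw [abs_of_nonneg (by linarith), abs_of_nonneg (by linarith), abs_of_nonneg (by linarith)]
    ring

theorem mapsTo_uIcc_of_monotoneOn_or_antitoneOn (hf : MonotoneOn f s ∨ AntitoneOn f s)
    {p q : α} (hpq : uIcc p q ⊆ s) : MapsTo f (uIcc p q) (uIcc (f p) (f q)) := by
  rcases hf with h | h
  · exact (h.mono hpq).mapsTo_uIcc
  · exact (h.mono hpq).mapsTo_uIcc

theorem sum_Ico_abs_sub_of_monotoneOn_or_antitoneOn (hf : MonotoneOn f s ∨ AntitoneOn f s)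
    {t : ℕ → α} (ht : Antitone t) (hts : ∀ i, t i ∈ s) {m n : ℕ} (hmn : m ≤ n) :
    ∑ i ∈ Finset.Ico m n, |f (t i) - f (t (i + 1))| = |f (t m) - f (t n)| := by
  induction n, hmn using Nat.le_induction with
  | base => simp
  | succ n hmn ih =>
    have additive := abs_sub_add_abs_sub_of_monotoneOn_or_antitoneOn hf (hts (n + 1)) (hts n)
      (hts m) (ht n.le_succ) (ht hmn)
    rw [Finset.sum_Ico_succ_top hmn, ih]
    simp only [abs_sub_comm (f (t (n + 1))), abs_sub_comm (f (t n)) (f (t m))] at additive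
    rw [add_comm, additive]

end MonotoneIncrements

section Distortion

/-- The increments of `f` over any two pairs of points of `s`, relative to the distances of these
points, differ by a factor of at most `κ`. For a `C¹` map on an interval this bounds the ratio of
any two values of the derivative; stating it without quotients avoids division by zero. -/
def DistortionOn {X Y : Type*} [PseudoMetricSpace X] [PseudoMetricSpace Y] (f : X → Y) (s : Set X)
    (κ : ℝ) : Prop :=
  ∀ x ∈ s, ∀ y ∈ s, ∀ u ∈ s, ∀ v ∈ s,
    dist (f x) (f y) * dist u v ≤ κ * (dist (f u) (f v) * dist x y)

namespace DistortionOn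

variable {X Y Z : Type*} [PseudoMetricSpace X] [MetricSpace Y] [PseudoMetricSpace Z]

theorem id_one (s : Set X) : DistortionOn id s 1 := fun x _ y _ u _ v _ ↦ by
  rw [id, id, id, id, one_mul, mul_comm]

theorem mono {f : X → Z} {s : Set X} {κ κ' : ℝ} (hf : DistortionOn f s κ) (hκ : κ ≤ κ') :
    DistortionOn f s κ' := fun x hx y hy u hu v hv ↦
  (hf x hx y hy u hu v hv).trans (by gcongr)

theorem comp {f : Y → Z} {g : X → Y} {s : Set X} {t : Set Y} {κ κ' : ℝ} (hf : DistortionOn f t κ)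
    (hg : DistortionOn g s κ') (hst : MapsTo g s t) (hinj : InjOn g s) (hκ : 0 ≤ κ) :
    DistortionOn (f ∘ g) s (κ * κ') := by
  intro x hx y hy u hu v hv
  rcases eq_or_ne x y with rfl | hxy
  · simp
  rcases eq_or_ne u v with rfl | huv
  · simp
  have gxy : 0 < dist (g x) (g y) := dist_pos.2 (hinj.ne hx hy hxy)
  have guv : 0 < dist (g u) (g v) := dist_pos.2 (hinj.ne hu hv huv)
  refine le_of_mul_le_mul_right ?_ (mul_pos guv gxy)
  calc dist (f (g x)) (f (g y)) * dist u v * (dist (g u) (g v) * dist (g x) (g y))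
      = dist (f (g x)) (f (g y)) * dist (g u) (g v) * (dist (g x) (g y) * dist u v) := by ring
    _ ≤ κ * (dist (f (g u)) (f (g v)) * dist (g x) (g y)) *
          (κ' * (dist (g u) (g v) * dist x y)) :=
        mul_le_mul (hf _ (hst hx) _ (hst hy) _ (hst hu) _ (hst hv)) (hg x hx y hy u hu v hv)
          (by positivity) (by positivity)
    _ = κ * κ' * (dist (f (g u)) (f (g v)) * dist x y) *
          (dist (g u) (g v) * dist (g x) (g y)) := by ring

end DistortionOn

variable {f f' : ℝ → ℝ} {s : Set ℝ}

theorem exists_abs_sub_eq_abs_deriv_mul (hs : s.OrdConnected)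
    (hf : ∀ x ∈ s, HasDerivAt f (f' x) x) {x y : ℝ} (hx : x ∈ s) (hy : y ∈ s) :
    ∃ z ∈ s, |f x - f y| = |f' z| * |x - y| := by
  wlog hxy : x < y generalizing x y
  · rcases (not_lt.1 hxy).eq_or_lt with rfl | hyx
    · exact ⟨y, hy, by simp⟩
    · simpa only [abs_sub_comm] using this hy hx hyx
  have hsub : Icc x y ⊆ s := hs.out hx hy
  obtain ⟨z, hz, slope⟩ := exists_hasDerivAt_eq_slope f f' hxy
    (fun z hz ↦ (hf z (hsub hz)).continuousAt.continuousWithinAt)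
    (fun z hz ↦ hf z (hsub (Ioo_subset_Icc_self hz)))
  refine ⟨z, hsub (Ioo_subset_Icc_self hz), ?_⟩
  rw [slope, abs_div, abs_sub_comm x y, abs_sub_comm (f x),
    div_mul_cancel₀ _ (abs_ne_zero.2 (sub_ne_zero.2 hxy.ne'))]

theorem distortionOn_of_abs_deriv_le (hs : s.OrdConnected) (hf : ∀ x ∈ s, HasDerivAt f (f' x) x)
    {κ : ℝ} (hκ : ∀ x ∈ s, ∀ y ∈ s, |f' y| ≤ κ * |f' x|) : DistortionOn f s κ := by
  intro x hx y hy u hu v hv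
  simp only [Real.dist_eq]
  obtain ⟨z, hz, hxy⟩ := exists_abs_sub_eq_abs_deriv_mul hs hf hx hy
  obtain ⟨z', hz', huv⟩ := exists_abs_sub_eq_abs_deriv_mul hs hf hu hv
  calc |f x - f y| * |u - v| = |f' z| * (|x - y| * |u - v|) := by rw [hxy]; ring
    _ ≤ κ * |f' z'| * (|x - y| * |u - v|) := by gcongr; exact hκ z' hz' z hz
    _ = κ * (|f u - f v| * |x - y|) := by rw [huv]; ring

theorem abs_le_exp_mul_abs_of_abs_logDeriv_le {c : ℝ} (hs : Convex ℝ s)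
    (hf : ∀ x ∈ s, HasDerivAt f (f' x) x) (hne : ∀ x ∈ s, f x ≠ 0)
    (hc : ∀ x ∈ s, |f' x / f x| ≤ c) {x y : ℝ} (hx : x ∈ s) (hy : y ∈ s) :
    |f y| ≤ Real.exp (c * |y - x|) * |f x| := by
  have log_lipschitz : |Real.log (f y) - Real.log (f x)| ≤ c * |y - x| :=
    hs.norm_image_sub_le_of_norm_hasDerivWithin_le
      (fun z hz ↦ ((hf z hz).log (hne z hz)).hasDerivWithinAt) hc hx hy
  rw [← Real.log_le_log_iff (abs_pos.2 (hne y hy))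
    (mul_pos (Real.exp_pos _) (abs_pos.2 (hne x hx))),
    Real.log_mul (Real.exp_ne_zero _) (abs_ne_zero.2 (hne x hx)), Real.log_exp, Real.log_abs,
    Real.log_abs]
  linarith [(abs_le.1 log_lipschitz).2]

end Distortion

section HausdorffContent

variable {X : Type*} [EMetricSpace X]

/-- The `t`-dimensional Hausdorff content: as the Hausdorff measure, but with no bound on the
diameters of the covering sets. It has the same null sets and is finite on bounded sets, so that
the scaling argument for self-similar sets applies to it. -/
def hausdorffContent (t : ℝ) : OuterMeasure X := OuterMeasure.boundedBy fun A ↦ Metric.ediam A ^ t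

variable {t : ℝ} {J : Set X}

theorem hausdorffContent_image_le {Y : Type*} [EMetricSpace Y] {ρ : NNReal} {f : X → Y} (ht : 0 ≤ t)
    (hf : LipschitzOnWith ρ f J) :
    hausdorffContent t (f '' J) ≤ (ρ : ENNReal) ^ t * hausdorffContent t J := by
  have comap_le : OuterMeasure.restrict J (OuterMeasure.comap f (hausdorffContent t)) ≤
      (ρ : ENNReal) ^ t • hausdorffContent t := by
    unfold hausdorffContent
    rw [OuterMeasure.smul_boundedBy
      (ENNReal.rpow_ne_top_of_nonneg ht ENNReal.coe_ne_top), OuterMeasure.le_boundedBy]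
    intro A
    rw [OuterMeasure.restrict_apply, OuterMeasure.comap_apply]
    calc OuterMeasure.boundedBy (fun A ↦ Metric.ediam A ^ t) (f '' (A ∩ J))
        ≤ Metric.ediam (f '' (A ∩ J)) ^ t := OuterMeasure.boundedBy_le _
      _ ≤ (ρ * Metric.ediam (A ∩ J)) ^ t := by
          gcongr
          refine Metric.ediam_image_le_iff.2 fun x hx y hy ↦ (hf hx.2 hy.2).trans ?_
          gcongr
          exact Metric.edist_le_ediam_of_mem hx hy
      _ ≤ (ρ * Metric.ediam A) ^ t := by
          gcongr
          exact inter_subset_left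
      _ = (ρ : ENNReal) ^ t * Metric.ediam A ^ t := ENNReal.mul_rpow_of_nonneg _ _ ht
  simpa using comap_le J

variable [MeasurableSpace X] [BorelSpace X]

theorem hausdorffContent_eq_zero_iff (ht : 0 < t) : hausdorffContent t J = 0 ↔ μH[t] J = 0 := by
  rw [hausdorffContent, OuterMeasure.boundedBy_apply, Measure.hausdorffMeasure_apply]
  refine ⟨fun content_zero ↦ ?_, fun measure_zero ↦ ?_⟩
  · refine ENNReal.iSup_eq_zero.2 fun r ↦ ENNReal.iSup_eq_zero.2 fun hr ↦ ?_
    refine nonpos_iff_eq_zero.1 (le_of_forall_pos_le_add fun ε hε ↦ ?_)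
    rw [zero_add]
    have small := content_zero.trans_lt (lt_min hε (ENNReal.rpow_pos_of_nonneg hr ht.le))
    simp only [iInf_lt_iff] at small
    obtain ⟨T, hT, hsum⟩ := small
    refine (iInf₂_le T hT).trans (iInf_le_of_le (fun n ↦ ?_) (hsum.le.trans (min_le_left _ _)))
    rcases (T n).eq_empty_or_nonempty with hn | hn
    · simp [hn]
    · have le_tsum := ENNReal.le_tsum (f := fun n ↦ ⨆ _ : (T n).Nonempty, Metric.ediam (T n) ^ t) n
      rw [iSup_pos hn] at le_tsum
      exact (ENNReal.rpow_le_rpow_iff ht).1 (le_tsum.trans (hsum.le.trans (min_le_right _ _)))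
  · have no_bound :=
      ENNReal.iSup_eq_zero.1 (ENNReal.iSup_eq_zero.1 measure_zero ⊤) ENNReal.zero_lt_top
    simpa only [le_top, implies_true, iInf_pos] using no_bound

theorem hausdorffMeasure_eq_zero_of_selfSimilar {ι : Type*} {s : Finset ι} {f : ι → X → X}
    {ρ : ι → NNReal} (hJ : Metric.ediam J ≠ ⊤) (hf : ∀ i ∈ s, LipschitzOnWith (ρ i) (f i) J)
    (hcov : J ⊆ ⋃ i ∈ s, f i '' J) (ht : 0 < t) (hsum : ∑ i ∈ s, ρ i ^ t < 1) : μH[t] J = 0 := by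
  rw [← hausdorffContent_eq_zero_iff ht]
  by_contra ne_zero
  have ne_top : hausdorffContent t J ≠ ⊤ :=
    ne_top_of_le_ne_top (ENNReal.rpow_ne_top_of_nonneg ht.le hJ) (OuterMeasure.boundedBy_le J)
  have sum_lt_one : ∑ i ∈ s, (ρ i : ENNReal) ^ t < 1 := by
    simp only [← ENNReal.coe_rpow_of_nonneg _ ht.le]
    exact_mod_cast hsum
  refine lt_irrefl (hausdorffContent t J) ?_
  calc hausdorffContent t J ≤ ∑ i ∈ s, hausdorffContent t (f i '' J) :=
        (measure_mono hcov).trans (measure_biUnion_finset_le s _)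
    _ ≤ ∑ i ∈ s, (ρ i : ENNReal) ^ t * hausdorffContent t J :=
        Finset.sum_le_sum fun i hi ↦ hausdorffContent_image_le ht.le (hf i hi)
    _ = (∑ i ∈ s, (ρ i : ENNReal) ^ t) * hausdorffContent t J := (Finset.sum_mul _ _ _).symm
    _ < 1 * hausdorffContent t J := ENNReal.mul_lt_mul_left ne_zero ne_top sum_lt_one
    _ = hausdorffContent t J := one_mul _

end HausdorffContent

section SizedCover

variable {X ι : Type*} [MetricSpace X]

/-- The sets `U i`, `i ∈ s`, cover `J`, and `U i` has diameter at most `d i`. The sizes `d i` are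
required to be positive, so that `d i ^ t` depends continuously on `t`. -/
structure IsSizedCover (J : Set X) (s : Finset ι) (U : ι → Set X) (d : ι → ℝ) : Prop where
  size_pos : ∀ i, 0 < d i
  dist_le : ∀ i, ∀ x ∈ U i, ∀ y ∈ U i, dist x y ≤ d i
  subset : J ⊆ ⋃ i ∈ s, U i

theorem exists_gap_of_disjoint_compacts [Finite ι] {A : ι → Set X} (hA : ∀ i, IsCompact (A i))
    (hdisj : Pairwise (Function.onFun Disjoint A)) :
    ∃ δ > 0, ∀ i j, i ≠ j → ∀ x ∈ A i, ∀ y ∈ A j, δ ≤ dist x y := by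
  have pair : ∀ i j, ∀ᶠ δ in 𝓝[>] (0 : ℝ), i ≠ j → ∀ x ∈ A i, ∀ y ∈ A j, δ ≤ dist x y := by
    intro i j
    by_cases hij : i = j
    · exact Eventually.of_forall fun _ hne ↦ absurd hij hne
    obtain ⟨r, hr, far⟩ := Metric.exists_pos_forall_lt_edist (hA i) (hA j).isClosed (hdisj hij)
    filter_upwards [Ioo_mem_nhdsGT (NNReal.coe_pos.2 hr)] with δ hδ _ x hx y hy
    have : (r : ℝ) < dist x y := by
      have := far x hx y hy
      rwa [edist_nndist, ENNReal.coe_lt_coe, ← NNReal.coe_lt_coe, coe_nndist] at this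
    exact (hδ.2.trans this).le
  obtain ⟨δ, hδ, hpos⟩ :=
    ((eventually_all.2 fun i ↦ eventually_all.2 (pair i)).and self_mem_nhdsWithin).exists
  exact ⟨δ, hpos, hδ⟩

theorem exists_lt_rpow_lt_add {D t ε : ℝ} (ht : 0 < t) (hε : 0 < ε) :
    ∃ d, D < d ∧ d ^ t < D ^ t + ε := by
  have near : ∀ᶠ d in 𝓝[>] D, d ^ t < D ^ t + ε :=
    ((Real.continuousAt_rpow_const D t (Or.inr ht.le)).eventually_lt_const
      (by linarith)).filter_mono nhdsWithin_le_nhds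
  obtain ⟨d, hd, hlt⟩ := (near.and self_mem_nhdsWithin).exists
  exact ⟨d, hlt, hd⟩

theorem dist_le_of_mem_thickening {A : Set X} (hA : Bornology.IsBounded A) {δ : ℝ} {x y : X}
    (hx : x ∈ Metric.thickening δ A) (hy : y ∈ Metric.thickening δ A) :
    dist x y ≤ Metric.diam A + 2 * δ := by
  obtain ⟨a, ha, hxa⟩ := Metric.mem_thickening_iff.1 hx
  obtain ⟨b, hb, hyb⟩ := Metric.mem_thickening_iff.1 hy
  linarith [dist_triangle4 x a b y, dist_comm b y, Metric.dist_le_diam_of_mem hA ha hb]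

theorem isBounded_of_iSup_ediam_rpow_ne_top {A : Set X} {t : ℝ} (ht : 0 < t)
    (hA : (⨆ _ : A.Nonempty, Metric.ediam A ^ t) ≠ ⊤) : Bornology.IsBounded A := by
  rcases A.eq_empty_or_nonempty with rfl | hne
  · exact Bornology.isBounded_empty
  · rw [iSup_pos hne] at hA
    exact Metric.isBounded_iff_ediam_ne_top.2 fun eq_top ↦
      hA (by rw [eq_top, ENNReal.top_rpow_of_pos ht])

theorem iSup_ediam_rpow_eq_ofReal_diam_rpow {A : Set X} {t : ℝ} (hA : Bornology.IsBounded A)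
    (ht : 0 < t) : (⨆ _ : A.Nonempty, Metric.ediam A ^ t) = ENNReal.ofReal (Metric.diam A ^ t) := by
  rcases A.eq_empty_or_nonempty with rfl | hne
  · simp [Real.zero_rpow ht.ne']
  · rw [iSup_pos hne, ← ENNReal.ofReal_rpow_of_nonneg Metric.diam_nonneg ht.le, Metric.diam,
      ENNReal.ofReal_toReal (Metric.isBounded_iff_ediam_ne_top.1 hA)]

theorem exists_isSizedCover_of_tsum_lt {J : Set X} (hJ : IsCompact J) {t ε : ℝ} (ht : 0 < t)
    {T : ℕ → Set X} (hT : J ⊆ ⋃ i, T i)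
    (hsum : ∑' i, ⨆ _ : (T i).Nonempty, Metric.ediam (T i) ^ t < ENNReal.ofReal ε) :
    ∃ (s : Finset ℕ) (U : ℕ → Set X) (d : ℕ → ℝ),
      IsSizedCover J s U d ∧ ∑ i ∈ s, d i ^ t < 2 * ε := by
  have bounded : ∀ i, Bornology.IsBounded (T i) := fun i ↦
    isBounded_of_iSup_ediam_rpow_ne_top ht ((ENNReal.le_tsum i).trans_lt hsum).ne_top
  have hε : 0 < ε := ENNReal.ofReal_pos.1 (bot_le.trans_lt hsum)
  choose d diam_lt rpow_lt using fun i : ℕ ↦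
    exists_lt_rpow_lt_add (D := Metric.diam (T i)) ht (show 0 < ε / 2 / 2 ^ i by positivity)
  obtain ⟨s, hs⟩ := hJ.elim_finite_subcover
    (fun i ↦ Metric.thickening ((d i - Metric.diam (T i)) / 2) (T i))
    (fun i ↦ Metric.isOpen_thickening)
    (hT.trans (iUnion_mono fun i ↦ Metric.self_subset_thickening (by linarith [diam_lt i]) _))
  refine ⟨s, _, d, ⟨fun i ↦ Metric.diam_nonneg.trans_lt (diam_lt i), ?_, hs⟩, ?_⟩
  · intro i x hx y hy
    linarith [dist_le_of_mem_thickening (bounded i) hx hy]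
  · have sum_diam : ∑ i ∈ s, Metric.diam (T i) ^ t < ε := by
      rw [← ENNReal.ofReal_lt_ofReal_iff hε,
        ENNReal.ofReal_sum_of_nonneg fun i _ ↦ Real.rpow_nonneg Metric.diam_nonneg _]
      simp only [← iSup_ediam_rpow_eq_ofReal_diam_rpow (bounded _) ht]
      exact (ENNReal.sum_le_tsum s).trans_lt hsum
    have sum_error : ∑ i ∈ s, ε / 2 / 2 ^ i ≤ ε :=
      sum_le_hasSum s (fun i _ ↦ by positivity) (hasSum_geometric_two' ε)
    calc ∑ i ∈ s, d i ^ t ≤ ∑ i ∈ s, (Metric.diam (T i) ^ t + ε / 2 / 2 ^ i) :=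
          Finset.sum_le_sum fun i _ ↦ (rpow_lt i).le
      _ = ∑ i ∈ s, Metric.diam (T i) ^ t + ∑ i ∈ s, ε / 2 / 2 ^ i := Finset.sum_add_distrib
      _ < 2 * ε := by linarith

end SizedCover

section SelfSimilar

variable {X ι κ : Type*} [MetricSpace X] {J : Set X}

open Classical in
theorem IsSizedCover.preimage {s : Finset κ} {U : κ → Set X} {d : κ → ℝ}
    (hcov : IsSizedCover J s U d) {f : X → X} (hf : MapsTo f J J) {c : ℝ} (hc : 0 < c)
    (hfc : ∀ x ∈ J, ∀ y ∈ J, c * dist x y ≤ dist (f x) (f y)) :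
    IsSizedCover J {a ∈ s | (U a ∩ f '' J).Nonempty} (fun a ↦ J ∩ f ⁻¹' U a) (fun a ↦ d a / c) where
  size_pos a := div_pos (hcov.size_pos a) hc
  dist_le := by
    rintro a x ⟨hx, hxU⟩ y ⟨hy, hyU⟩
    rw [le_div_iff₀' hc]
    exact (hfc x hx y hy).trans (hcov.dist_le a _ hxU _ hyU)
  subset := by
    intro x hx
    obtain ⟨a, ha, hxa⟩ := mem_iUnion₂.1 (hcov.subset (hf hx))
    exact mem_iUnion₂.2
      ⟨a, Finset.mem_filter.2 ⟨ha, f x, hxa, mem_image_of_mem f hx⟩, hx, hxa⟩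

open Classical in
theorem IsSizedCover.disjoint_filter_inter_nonempty {s : Finset κ} {U : κ → Set X} {d : κ → ℝ}
    (hcov : IsSizedCover J s U d) {gap : ℝ} (small : ∀ a ∈ s, d a < gap) {A B : Set X}
    (far : ∀ x ∈ A, ∀ y ∈ B, gap ≤ dist x y) :
    Disjoint {a ∈ s | (U a ∩ A).Nonempty} {a ∈ s | (U a ∩ B).Nonempty} := by
  refine Finset.disjoint_left.2 fun a haA haB ↦ ?_
  obtain ⟨has, x, hxU, hx⟩ := Finset.mem_filter.1 haA
  obtain ⟨-, y, hyU, hy⟩ := Finset.mem_filter.1 haB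
  exact ((far x hx y hy).trans (hcov.dist_le a x hxU y hyU)).not_gt (small a has)

variable [Fintype ι] [Nontrivial ι] {f : ι → X → X} {c : ι → ℝ} {gap t : ℝ}

/- Covering sets smaller than the gap meet only one of the images `f i '' J`; pulled back by `f i`
they form a cover of `J` with fewer sets, to which induction applies. -/
theorem gap_rpow_le_sum_of_isSizedCover (hJ : J.Nonempty) (hf : ∀ i, MapsTo (f i) J J)
    (hgap : 0 < gap) (ht : 0 < t)
    (hfar : ∀ i j, i ≠ j → ∀ x ∈ f i '' J, ∀ y ∈ f j '' J, gap ≤ dist x y) (hc : ∀ i, 0 < c i)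
    (hfc : ∀ i, ∀ x ∈ J, ∀ y ∈ J, c i * dist x y ≤ dist (f i x) (f i y))
    (hsum : 1 ≤ ∑ i, c i ^ t) {s : Finset κ} {U : κ → Set X} {d : κ → ℝ}
    (hcov : IsSizedCover J s U d) : gap ^ t ≤ ∑ a ∈ s, d a ^ t := by
  classical
  induction s using Finset.strongInduction generalizing U d with
  | H s ih =>
  have pow_nonneg : ∀ a, 0 ≤ d a ^ t := fun a ↦ Real.rpow_nonneg (hcov.size_pos a).le _
  by_cases large : ∃ a ∈ s, gap ≤ d a
  · obtain ⟨a, ha, hda⟩ := large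
    exact (Real.rpow_le_rpow hgap.le hda ht.le).trans
      (Finset.single_le_sum (fun a _ ↦ pow_nonneg a) ha)
  push Not at large
  let meeting : ι → Finset κ := fun i ↦ {a ∈ s | (U a ∩ f i '' J).Nonempty}
  have sub : ∀ i, meeting i ⊆ s := fun i ↦ Finset.filter_subset _ _
  have disj : ∀ i j, i ≠ j → Disjoint (meeting i) (meeting j) :=
    fun i j hij ↦ hcov.disjoint_filter_inter_nonempty large (hfar i j hij)
  have cover : ∀ i, IsSizedCover J (meeting i) (fun a ↦ J ∩ f i ⁻¹' U a) (fun a ↦ d a / c i) :=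
    fun i ↦ hcov.preimage (hf i) (hc i) (hfc i)
  have ssub : ∀ i, meeting i ⊂ s := by
    intro i
    obtain ⟨j, hji⟩ := exists_ne i
    obtain ⟨x, hx⟩ := hJ
    obtain ⟨a, ha, -⟩ := mem_iUnion₂.1 ((cover j).subset hx)
    exact (Finset.ssubset_iff_of_subset (sub i)).2
      ⟨a, sub j ha, Finset.disjoint_left.1 (disj j i hji) ha⟩
  have piece : ∀ i, c i ^ t * gap ^ t ≤ ∑ a ∈ meeting i, d a ^ t := by
    intro i
    have := ih (meeting i) (ssub i) (cover i)
    simp only [fun a ↦ Real.div_rpow (hcov.size_pos a).le (hc i).le] at this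
    rwa [← Finset.sum_div, le_div_iff₀' (Real.rpow_pos_of_pos (hc i) _)] at this
  calc gap ^ t ≤ (∑ i, c i ^ t) * gap ^ t := le_mul_of_one_le_left (by positivity) hsum
    _ = ∑ i, c i ^ t * gap ^ t := Finset.sum_mul _ _ _
    _ ≤ ∑ i, ∑ a ∈ meeting i, d a ^ t := Finset.sum_le_sum fun i _ ↦ piece i
    _ = ∑ a ∈ Finset.univ.biUnion meeting, d a ^ t :=
        (Finset.sum_biUnion fun i _ j _ ↦ disj i j).symm
    _ ≤ ∑ a ∈ s, d a ^ t := Finset.sum_le_sum_of_subset_of_nonneg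
        (Finset.biUnion_subset.2 fun i _ ↦ sub i) fun a _ _ ↦ pow_nonneg a

variable [MeasurableSpace X] [BorelSpace X]

theorem exists_isSizedCover_sum_rpow_lt (hJ : IsCompact J) (ht : 0 < t) (h0 : μH[t] J = 0) {ε : ℝ}
    (hε : 0 < ε) : ∃ (s : Finset ℕ) (U : ℕ → Set X) (d : ℕ → ℝ),
      IsSizedCover J s U d ∧ ∑ i ∈ s, d i ^ t < ε := by
  have small : hausdorffContent t J < ENNReal.ofReal (ε / 2) := by
    rw [(hausdorffContent_eq_zero_iff ht).2 h0]
    exact ENNReal.ofReal_pos.2 (half_pos hε)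
  rw [hausdorffContent, OuterMeasure.boundedBy_apply] at small
  simp only [iInf_lt_iff] at small
  obtain ⟨T, hT, hsum⟩ := small
  simpa only [mul_div_cancel₀ ε two_ne_zero] using exists_isSizedCover_of_tsum_lt hJ ht hT hsum

theorem continuous_sum_const_rpow {s : Finset κ} {a : κ → ℝ} (ha : ∀ i, 0 < a i) :
    Continuous fun t : ℝ ↦ ∑ i ∈ s, a i ^ t :=
  continuous_finsetSum _ fun i _ ↦ Real.continuous_const_rpow (ha i).ne'

variable {h : ℝ}

theorem sum_rpow_le_one_of_dimH_le (hJ : IsCompact J) (hne : J.Nonempty)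
    (hf : ∀ i, MapsTo (f i) J J) (hcont : ∀ i, ContinuousOn (f i) J)
    (hdisj : Pairwise (Function.onFun Disjoint fun i ↦ f i '' J)) (hc : ∀ i, 0 < c i)
    (hfc : ∀ i, ∀ x ∈ J, ∀ y ∈ J, c i * dist x y ≤ dist (f i x) (f i y)) (h0 : 0 < h)
    (hdim : dimH J ≤ ENNReal.ofReal h) : ∑ i, c i ^ h ≤ 1 := by
  by_contra! one_lt
  have near : ∀ᶠ t in 𝓝[>] h, 1 < ∑ i, c i ^ t :=
    ((continuous_sum_const_rpow hc).continuousAt.eventually_const_lt one_lt).filter_mono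
      nhdsWithin_le_nhds
  obtain ⟨t, one_lt_t, hht⟩ := (near.and self_mem_nhdsWithin).exists
  have t_pos : 0 < t := h0.trans hht
  have null : μH[t] J = 0 := by
    have dim_lt : dimH J < t.toNNReal :=
      hdim.trans_lt ((ENNReal.ofReal_lt_ofReal_iff t_pos).2 hht)
    simpa only [Real.coe_toNNReal _ t_pos.le] using hausdorffMeasure_of_dimH_lt dim_lt
  obtain ⟨gap, gap_pos, hgap⟩ :=
    exists_gap_of_disjoint_compacts (fun i ↦ hJ.image_of_continuousOn (hcont i)) hdisj
  obtain ⟨s, U, d, cover, sum_lt⟩ :=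
    exists_isSizedCover_sum_rpow_lt hJ t_pos null (Real.rpow_pos_of_pos gap_pos t)
  exact (gap_rpow_le_sum_of_isSizedCover hne hf gap_pos t_pos hgap hc hfc one_lt_t.le
    cover).not_gt sum_lt

/- If `J` were null, a fine cover would exhibit it as the union of small copies of itself with
`∑ (C * d i) ^ h < 1`, hence also `∑ (C * d i) ^ t < 1` for some `t < h`, and `J` would be null in
a dimension below its own. -/
theorem hausdorffMeasure_pos_of_le_dimH (hJ : IsCompact J) {C : ℝ} (hC : 0 < C)
    (copies : ∀ (U : Set X) (d : ℝ), 0 < d → (∀ x ∈ U, ∀ y ∈ U, dist x y ≤ d) →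
      ∃ f : X → X, (∀ x ∈ J, ∀ y ∈ J, dist (f x) (f y) ≤ C * d * dist x y) ∧ U ∩ J ⊆ f '' J)
    (h0 : 0 < h) (hdim : ENNReal.ofReal h ≤ dimH J) : 0 < μH[h] J := by
  refine pos_iff_ne_zero.2 fun null ↦ ?_
  obtain ⟨s, U, d, cover, sum_lt⟩ :=
    exists_isSizedCover_sum_rpow_lt hJ h0 null (one_div_pos.2 (Real.rpow_pos_of_pos hC h))
  choose f hlip hsub using fun i ↦ copies (U i) (d i) (cover.size_pos i) (cover.dist_le i)
  have ratio_pos : ∀ i, 0 < C * d i := fun i ↦ mul_pos hC (cover.size_pos i)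
  have sum_lt_one : ∑ i ∈ s, (C * d i) ^ h < 1 := by
    simp only [fun i ↦ Real.mul_rpow hC.le (cover.size_pos i).le (z := h), ← Finset.mul_sum]
    rwa [lt_div_iff₀' (Real.rpow_pos_of_pos hC h)] at sum_lt
  have near : ∀ᶠ t in 𝓝[<] h, ∑ i ∈ s, (C * d i) ^ t < 1 ∧ 0 < t :=
    (((continuous_sum_const_rpow ratio_pos).continuousAt.eventually_lt_const sum_lt_one).and
      (lt_mem_nhds h0)).filter_mono nhdsWithin_le_nhds
  obtain ⟨t, ⟨sum_t_lt, t_pos⟩, hth⟩ := (near.and self_mem_nhdsWithin).exists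
  have infinite : μH[t] J = ⊤ := by
    have lt_dim : t.toNNReal < dimH J := ((ENNReal.ofReal_lt_ofReal_iff h0).2 hth).trans_le hdim
    simpa only [Real.coe_toNNReal _ t_pos.le] using hausdorffMeasure_of_lt_dimH lt_dim
  refine ENNReal.zero_ne_top (Eq.trans (Eq.symm ?_) infinite)
  refine hausdorffMeasure_eq_zero_of_selfSimilar (s := s) (f := f)
    (ρ := fun i ↦ ⟨C * d i, (ratio_pos i).le⟩)
    (Metric.isBounded_iff_ediam_ne_top.1 hJ.isBounded)
    (fun i _ ↦ LipschitzOnWith.of_dist_le_mul (hlip i)) (fun x hx ↦ ?_) t_pos ?_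
  · obtain ⟨i, hi, hxi⟩ := mem_iUnion₂.1 (cover.subset hx)
    exact mem_iUnion₂.2 ⟨i, hi, hsub i ⟨hxi, hx⟩⟩
  · rw [← NNReal.coe_lt_coe]
    push_cast
    exact sum_t_lt

end SelfSimilar

section MassDistribution

variable {E : Set ℝ} {h : ℝ} {B : ENNReal}

theorem hausdorffMeasure_inter_le_of_forall_Icc (hE : IsCompact E) (h0 : 0 ≤ h)
    (hB : ∀ p ∈ E, ∀ q ∈ E, p ≤ q → μH[h] (E ∩ Icc p q) ≤ B * ENNReal.ofReal (q - p) ^ h)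
    (U : Set ℝ) : μH[h] (E ∩ U) ≤ B * Metric.ediam U ^ h := by
  rcases (E ∩ U).eq_empty_or_nonempty with empty | nonempty
  · rw [empty, measure_empty]
    exact zero_le
  have bounded : Bornology.IsBounded (E ∩ U) := hE.isBounded.subset inter_subset_left
  have closure_subset : closure (E ∩ U) ⊆ E := hE.isClosed.closure_subset_iff.2 inter_subset_left
  calc μH[h] (E ∩ U) ≤ μH[h] (E ∩ Icc (sInf (E ∩ U)) (sSup (E ∩ U))) :=
        measure_mono <| subset_inter inter_subset_left
          (subset_Icc_csInf_csSup bounded.bddBelow bounded.bddAbove)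
    _ ≤ B * ENNReal.ofReal (sSup (E ∩ U) - sInf (E ∩ U)) ^ h :=
        hB _ (closure_subset (csInf_mem_closure nonempty bounded.bddBelow))
          _ (closure_subset (csSup_mem_closure nonempty bounded.bddAbove))
          (csInf_le_csSup nonempty bounded.bddBelow bounded.bddAbove)
    _ ≤ B * Metric.ediam U ^ h := by
        rw [← Real.ediam_eq bounded]
        gcongr
        exact inter_subset_right

theorem one_le_of_forall_hausdorffMeasure_inter_Icc_le (hE : IsCompact E) (h0 : 0 ≤ h)
    (hE0 : μH[h] E ≠ 0) (hE_top : μH[h] E ≠ ⊤)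
    (hB : ∀ p ∈ E, ∀ q ∈ E, p ≤ q → μH[h] (E ∩ Icc p q) ≤ B * ENNReal.ofReal (q - p) ^ h) :
    1 ≤ B := by
  by_contra! B_lt_one
  have restrict_le (U : Set ℝ) : μH[h].restrict E U ≤ B * Metric.ediam U ^ h := by
    rw [Measure.restrict_apply' hE.measurableSet, inter_comm]
    exact hausdorffMeasure_inter_le_of_forall_Icc hE h0 hB U
  have B_ne_zero : B ≠ 0 := by
    rintro rfl
    have := restrict_le E
    rw [Measure.restrict_apply_self, zero_mul, nonpos_iff_eq_zero] at this
    exact hE0 this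
  have smul_le : B⁻¹ • μH[h].restrict E ≤ μH[h] :=
    Measure.le_hausdorffMeasure h _ 1 one_pos fun U _ ↦ by
      rw [Measure.smul_apply, smul_eq_mul, ENNReal.inv_mul_le_iff B_ne_zero B_lt_one.ne_top]
      exact restrict_le U
  have measure_le := smul_le E
  rw [Measure.smul_apply, smul_eq_mul, ENNReal.inv_mul_le_iff B_ne_zero B_lt_one.ne_top,
    Measure.restrict_apply_self] at measure_le
  exact measure_le.not_gt (ENNReal.mul_lt_of_lt_div (by rwa [ENNReal.div_self hE0 hE_top]))

end MassDistribution

theorem abs_le_distortion_mul_abs {f' : ℝ → ℝ} {C : ℝ}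
    (hC : ∀ x ∈ Icc (0 : ℝ) 1, ∀ y ∈ Icc (0 : ℝ) 1, |f' y| / |f' x| ≤ C) {x y : ℝ}
    (hx : x ∈ Icc (0 : ℝ) 1) (hy : y ∈ Icc (0 : ℝ) 1) (hne : f' x ≠ 0) :
    |f' y| ≤ distortion f' * |f' x| := by
  have C_nonneg : 0 ≤ C := (by positivity : 0 ≤ |f' y| / |f' x|).trans (hC x hx y hy)
  rw [← div_le_iff₀ (abs_pos.2 hne)]
  calc |f' y| / |f' x| ≤ ⨆ y ∈ Icc (0 : ℝ) 1, |f' y| / |f' x| := by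
        refine le_ciSup₂ (f := fun y (_ : y ∈ Icc (0 : ℝ) 1) ↦ |f' y| / |f' x|) ⟨C, ?_⟩ y hy
        simp only [mem_upperBounds, mem_iUnion]
        rintro _ ⟨z, hz, rfl⟩
        exact hC x hx z hz
    _ ≤ distortion f' := by
        refine le_ciSup₂ (f := fun x (_ : x ∈ Icc (0 : ℝ) 1) ↦
          ⨆ y ∈ Icc (0 : ℝ) 1, |f' y| / |f' x|) ⟨C, ?_⟩ x hx
        simp only [mem_upperBounds, mem_iUnion]
        rintro _ ⟨z, hz, rfl⟩
        exact Real.iSup_le (fun u ↦ Real.iSup_le (hC z hz u) C_nonneg) C_nonneg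

/-- A word over the alphabet `{1, …, n}`, indexing a composition of maps of the system `S_n`. -/
def IsWord (n : ℕ) (w : List ℕ) : Prop := ∀ i ∈ w, i ∈ Icc 1 n

namespace IsWord

variable {n k : ℕ} {w v : List ℕ}

theorem nil (n : ℕ) : IsWord n [] := List.forall_mem_nil _

theorem cons_iff : IsWord n (k :: w) ↔ k ∈ Icc 1 n ∧ IsWord n w := List.forall_mem_cons

theorem append (hw : IsWord n w) (hv : IsWord n v) : IsWord n (w ++ v) :=
  List.forall_mem_append.2 ⟨hw, hv⟩

theorem concat (hw : IsWord n w) (hk : k ∈ Icc 1 n) : IsWord n (w ++ [k]) :=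
  hw.append (List.forall_mem_singleton.2 hk)

end IsWord

/-- The set of words of length `l` over the alphabet `{1, …, n}`. -/
def wordFinset (n : ℕ) : ℕ → Finset (List ℕ)
  | 0 => {[]}
  | l + 1 => (Finset.Icc 1 n ×ˢ wordFinset n l).image fun p ↦ p.1 :: p.2

theorem mem_wordFinset {n l : ℕ} {w : List ℕ} :
    w ∈ wordFinset n l ↔ w.length = l ∧ IsWord n w := by
  induction l generalizing w with
  | zero =>
    rw [wordFinset, Finset.mem_singleton, List.length_eq_zero_iff]
    exact ⟨fun h ↦ ⟨h, h ▸ IsWord.nil n⟩, fun h ↦ h.1⟩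
  | succ l ih =>
    simp only [wordFinset, Finset.mem_image, Finset.mem_product, Finset.mem_Icc, Prod.exists, ih]
    constructor
    · rintro ⟨k, v, ⟨hk, hlen, hv⟩, rfl⟩
      exact ⟨congrArg (· + 1) hlen, IsWord.cons_iff.2 ⟨hk, hv⟩⟩
    · rintro ⟨hlen, hw⟩
      obtain ⟨k, v, rfl⟩ := List.exists_cons_of_length_eq_add_one hlen
      rw [IsWord.cons_iff] at hw
      exact ⟨k, v, ⟨hw.1, Nat.succ_injective hlen, hw.2⟩, rfl⟩

namespace NonlinearIFS

variable (S : NonlinearIFS)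

theorem b_pos (k : ℕ) : 0 < S.b k :=
  (S.b_anti.antitone.le_of_tendsto S.b_lim (k + 1)).trans_lt (S.b_anti k.lt_succ_self)

theorem b_le_one (k : ℕ) : S.b k ≤ 1 := S.b_zero ▸ S.b_anti.antitone k.zero_le

theorem b_mem_Icc (k : ℕ) : S.b k ∈ Icc (0 : ℝ) 1 := ⟨(S.b_pos k).le, S.b_le_one k⟩

theorem exists_forall_b_div_b_succ_le {η : ℝ} (hη : 1 < η) :
    ∃ N, ∀ k, N ≤ k → S.b k / S.b (k + 1) ≤ η := by
  obtain ⟨N, sup_lt, sup_pos⟩ :=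
    ((S.N2.eventually_lt_const hη).and (S.N2.eventually_const_lt zero_lt_one)).exists
  have bdd : BddAbove (range fun k ↦ ⨆ _ : k ∈ Ici N, S.b k / S.b (k + 1)) := by
    by_contra unbdd
    rw [iSup, Real.sSup_of_not_bddAbove unbdd] at sup_pos
    exact lt_irrefl _ sup_pos
  refine ⟨N, fun k hk ↦ le_trans ?_ sup_lt.le⟩
  have le_sup := le_ciSup bdd k
  rwa [ciSup_pos (show k ∈ Ici N from hk)] at le_sup

section Constants

theorem exists_contractionRatio :
    ∃ α ∈ Ioo (0 : ℝ) 1, ∀ n, 1 ≤ n → ∀ x ∈ Icc (0 : ℝ) 1, |S.g' n x| < α := by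
  obtain ⟨α, lt_one, hα⟩ := S.N5
  exact ⟨α, ⟨(abs_nonneg _).trans_lt (hα 1 le_rfl 0 unitInterval.zero_mem), lt_one⟩, hα⟩

/-- The uniform contraction ratio `α < 1` of (N5). -/
def contractionRatio : ℝ := S.exists_contractionRatio.choose

/-- The uniform bound `c` on `|g''/g'|` of (N3). -/
def logDerivBound : ℝ := S.N3.choose

/-- The constant `C` such that all compositions `f_w` have distortion at most `exp (C * |I|)` on
every interval `I`, obtained by summing the geometric series of the lengths of the images of `I`. -/
def logDistortion : ℝ := S.logDerivBound / (1 - S.contractionRatio)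

/-- A bound for the distortion of all compositions `f_w` on `[0,1]`. -/
def distortionConst : ℝ := Real.exp S.logDistortion

theorem contractionRatio_pos : 0 < S.contractionRatio := S.exists_contractionRatio.choose_spec.1.1

theorem contractionRatio_lt_one : S.contractionRatio < 1 :=
  S.exists_contractionRatio.choose_spec.1.2

theorem logDerivBound_pos : 0 < S.logDerivBound := S.N3.choose_spec.1

theorem logDistortion_pos : 0 < S.logDistortion :=
  div_pos S.logDerivBound_pos (sub_pos.2 S.contractionRatio_lt_one)

theorem distortionConst_pos : 0 < S.distortionConst := Real.exp_pos _

end Constants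

section Generators

variable {S} {k : ℕ} {x y : ℝ}

theorem g_mapsTo_Icc_b (hk : 1 ≤ k) : MapsTo (S.g k) (Icc 0 1) (Icc (S.b k) (S.b (k - 1))) := by
  rw [← S.g_image k hk]
  exact mapsTo_image _ _

theorem g_mapsTo (hk : 1 ≤ k) : MapsTo (S.g k) (Icc 0 1) (Icc 0 1) :=
  (g_mapsTo_Icc_b hk).mono_right (Icc_subset_Icc (S.b_pos k).le (S.b_le_one _))

theorem g_continuousOn (hk : 1 ≤ k) : ContinuousOn (S.g k) (Icc 0 1) := fun x hx ↦
  (S.deriv1 k hk x hx).continuousAt.continuousWithinAt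

theorem abs_g_sub_le (hk : 1 ≤ k) (hx : x ∈ Icc (0 : ℝ) 1) (hy : y ∈ Icc (0 : ℝ) 1) :
    |S.g k x - S.g k y| ≤ S.contractionRatio * |x - y| := by
  obtain ⟨z, hz, mean_value⟩ :=
    exists_abs_sub_eq_abs_deriv_mul ordConnected_Icc (S.deriv1 k hk) hx hy
  rw [mean_value]
  gcongr
  exact (S.exists_contractionRatio.choose_spec.2 k hk z hz).le

theorem abs_g'_le_exp_mul (hk : 1 ≤ k) (hx : x ∈ Icc (0 : ℝ) 1) (hy : y ∈ Icc (0 : ℝ) 1) :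
    |S.g' k y| ≤ Real.exp (S.logDerivBound * |y - x|) * |S.g' k x| :=
  abs_le_exp_mul_abs_of_abs_logDeriv_le (convex_Icc 0 1) (S.deriv2 k hk) (S.deriv_ne k hk)
    (fun z hz ↦ (S.N3.choose_spec.2 k hk z hz).le) hx hy

theorem distortionOn_g_uIcc (hk : 1 ≤ k) (hx : x ∈ Icc (0 : ℝ) 1) (hy : y ∈ Icc (0 : ℝ) 1) :
    DistortionOn (S.g k) (uIcc x y) (Real.exp (S.logDerivBound * |y - x|)) := by
  have hsub : uIcc x y ⊆ Icc 0 1 := uIcc_subset_Icc hx hy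
  refine distortionOn_of_abs_deriv_le ordConnected_uIcc (fun z hz ↦ S.deriv1 k hk z (hsub hz))
    fun z hz z' hz' ↦ (abs_g'_le_exp_mul hk (hsub hz) (hsub hz')).trans ?_
  have dist_le : |z' - z| ≤ |y - x| := abs_sub_le_of_uIcc_subset_uIcc (uIcc_subset_uIcc hz hz')
  have := S.logDerivBound_pos
  gcongr Real.exp (_ * ?_) * _

theorem distortionOn_g (hk : 1 ≤ k) : DistortionOn (S.g k) (Icc 0 1) (distortion (S.g' k)) := by
  refine distortionOn_of_abs_deriv_le ordConnected_Icc (S.deriv1 k hk) fun x hx y hy ↦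
    abs_le_distortion_mul_abs (C := Real.exp S.logDerivBound) (fun u hu v hv ↦ ?_) hx hy
      (S.deriv_ne k hk x hx)
  rw [div_le_iff₀ (abs_pos.2 (S.deriv_ne k hk u hu))]
  refine (abs_g'_le_exp_mul hk hu hv).trans ?_
  gcongr
  refine mul_le_of_le_one_right S.logDerivBound_pos.le (abs_le.2 ⟨?_, ?_⟩)
  · linarith [hu.2, hv.1]
  · linarith [hu.1, hv.2]

end Generators

section WordMaps

/-- The composition `f_w = g_{i₁} ∘ ⋯ ∘ g_{i_l}` along the word `w = i₁ … i_l`. -/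
abbrev f (w : List ℕ) : ℝ → ℝ := wordComp S.g w

variable {n k : ℕ} {w : List ℕ} {x y : ℝ}

theorem f_append (w v : List ℕ) : S.f (w ++ v) = S.f w ∘ S.f v := by
  induction w with
  | nil => rfl
  | cons k w ih => exact congrArg (S.g k ∘ ·) ih

theorem f_concat (w : List ℕ) (k : ℕ) : S.f (w ++ [k]) = S.f w ∘ S.g k := S.f_append w [k]

variable {S}

theorem f_mapsTo (hw : IsWord n w) : MapsTo (S.f w) (Icc 0 1) (Icc 0 1) := by
  induction w with
  | nil => exact mapsTo_id _
  | cons k w ih =>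
    rw [IsWord.cons_iff] at hw
    exact (g_mapsTo hw.1.1).comp (ih hw.2)

theorem f_continuousOn (hw : IsWord n w) : ContinuousOn (S.f w) (Icc 0 1) := by
  induction w with
  | nil => exact continuousOn_id
  | cons k w ih =>
    rw [IsWord.cons_iff] at hw
    exact (g_continuousOn hw.1.1).comp (ih hw.2) (f_mapsTo hw.2)

theorem f_strictMonoOn_or_strictAntiOn (hw : IsWord n w) :
    StrictMonoOn (S.f w) (Icc 0 1) ∨ StrictAntiOn (S.f w) (Icc 0 1) := by
  induction w with
  | nil => exact Or.inl (strictMono_id.strictMonoOn _)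
  | cons k w ih =>
    rw [IsWord.cons_iff] at hw
    rcases ih hw.2 with h | h
    · exact Or.inr ((S.g_anti k hw.1.1).comp_strictMonoOn h (f_mapsTo hw.2))
    · exact Or.inl ((S.g_anti k hw.1.1).comp h (f_mapsTo hw.2))

theorem f_monotoneOn_or_antitoneOn (hw : IsWord n w) :
    MonotoneOn (S.f w) (Icc 0 1) ∨ AntitoneOn (S.f w) (Icc 0 1) :=
  (f_strictMonoOn_or_strictAntiOn hw).imp StrictMonoOn.monotoneOn StrictAntiOn.antitoneOn

theorem f_injOn (hw : IsWord n w) : InjOn (S.f w) (Icc 0 1) :=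
  (f_strictMonoOn_or_strictAntiOn hw).elim StrictMonoOn.injOn StrictAntiOn.injOn

theorem abs_f_sub_le (hw : IsWord n w) (hx : x ∈ Icc (0 : ℝ) 1) (hy : y ∈ Icc (0 : ℝ) 1) :
    |S.f w x - S.f w y| ≤ S.contractionRatio ^ w.length * |x - y| := by
  induction w with
  | nil => simp [wordComp]
  | cons k w ih =>
    rw [IsWord.cons_iff] at hw
    calc |S.f (k :: w) x - S.f (k :: w) y|
        ≤ S.contractionRatio * |S.f w x - S.f w y| :=
          abs_g_sub_le hw.1.1 (f_mapsTo hw.2 hx) (f_mapsTo hw.2 hy)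
      _ ≤ S.contractionRatio * (S.contractionRatio ^ w.length * |x - y|) :=
          mul_le_mul_of_nonneg_left (ih hw.2) S.contractionRatio_pos.le
      _ = S.contractionRatio ^ (k :: w).length * |x - y| := by rw [List.length_cons]; ring

theorem distortionOn_f_uIcc_of_length (hw : IsWord n w) (hx : x ∈ Icc (0 : ℝ) 1)
    (hy : y ∈ Icc (0 : ℝ) 1) : DistortionOn (S.f w) (uIcc x y)
      (Real.exp (S.logDistortion * (1 - S.contractionRatio ^ w.length) * |y - x|)) := by
  induction w with
  | nil => simpa [wordComp] using DistortionOn.id_one (uIcc x y)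
  | cons k w ih =>
    rw [IsWord.cons_iff] at hw
    have hsub : uIcc x y ⊆ Icc 0 1 := uIcc_subset_Icc hx hy
    have geometric_step : Real.exp (S.logDistortion *
          (1 - S.contractionRatio ^ (k :: w).length) * |y - x|) =
        Real.exp (S.logDerivBound * (S.contractionRatio ^ w.length * |y - x|)) *
          Real.exp (S.logDistortion * (1 - S.contractionRatio ^ w.length) * |y - x|) := by
      have : 1 - S.contractionRatio ≠ 0 := (sub_pos.2 S.contractionRatio_lt_one).ne'
      rw [← Real.exp_add, List.length_cons, logDistortion]
      congr 1
      field_simp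
      ring
    rw [geometric_step]
    refine DistortionOn.comp (DistortionOn.mono
        (distortionOn_g_uIcc hw.1.1 (f_mapsTo hw.2 hx) (f_mapsTo hw.2 hy)) ?_) (ih hw.2)
      (mapsTo_uIcc_of_monotoneOn_or_antitoneOn (f_monotoneOn_or_antitoneOn hw.2) hsub)
      ((f_injOn hw.2).mono hsub) (Real.exp_pos _).le
    gcongr
    · exact S.logDerivBound_pos.le
    · exact abs_f_sub_le hw.2 hy hx

theorem distortionOn_f_uIcc (hw : IsWord n w) (hx : x ∈ Icc (0 : ℝ) 1) (hy : y ∈ Icc (0 : ℝ) 1) :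
    DistortionOn (S.f w) (uIcc x y) (Real.exp (S.logDistortion * |y - x|)) := by
  refine (distortionOn_f_uIcc_of_length hw hx hy).mono ?_
  gcongr
  have := pow_pos S.contractionRatio_pos w.length
  exact mul_le_of_le_one_right S.logDistortion_pos.le (by linarith)

theorem distortionOn_f (hw : IsWord n w) : DistortionOn (S.f w) (Icc 0 1) S.distortionConst := by
  have := distortionOn_f_uIcc (S := S) hw unitInterval.zero_mem unitInterval.one_mem
  rwa [uIcc_of_le zero_le_one, sub_zero, abs_one, mul_one] at this

variable (S) in
/-- The distortion bound `κ` holds for all compositions whose innermost map has index beyond `N`;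
these have small distortion, because that map is nearly affine and its image is short. -/
def HasTailDistortion (N : ℕ) (κ : ℝ) : Prop :=
  ∀ ⦃n w k⦄, IsWord n w → N < k → DistortionOn (S.f (w ++ [k])) (Icc 0 1) κ

variable (S) in
theorem exists_hasTailDistortion {κ : ℝ} (hκ : 1 < κ) : ∃ N, S.HasTailDistortion N κ := by
  have tail_factor : Tendsto
      (fun k ↦ Real.exp (S.logDistortion * |S.b (k - 1) - S.b k|) * distortion (S.g' k))
      atTop (𝓝 (Real.exp (S.logDistortion * |0 - 0|) * 1)) :=
    ((((S.b_lim.comp (tendsto_sub_atTop_nat 1)).sub S.b_lim).abs.const_mul _).rexp).mul S.N4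
  rw [sub_zero, abs_zero, mul_zero, Real.exp_zero, mul_one] at tail_factor
  obtain ⟨N, hN⟩ := eventually_atTop.1 (tail_factor.eventually_lt_const hκ)
  refine ⟨N, fun n w k hw hk ↦ ?_⟩
  have one_le_k : 1 ≤ k := by lia
  rw [f_concat]
  refine (DistortionOn.comp (distortionOn_f_uIcc hw (S.b_mem_Icc k) (S.b_mem_Icc (k - 1)))
    (distortionOn_g one_le_k) ?_ (S.g_anti k one_le_k).injOn (Real.exp_pos _).le).mono
    (hN k hk.le).le
  exact (g_mapsTo_Icc_b one_le_k).mono_right Icc_subset_uIcc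

end WordMaps

variable {S : NonlinearIFS}

section LimitSet

variable {n k j : ℕ} {w v : List ℕ} {x y : ℝ}

variable (S) in
/-- The `l`-th approximation of the limit set, the union of the images of `[0,1]` under all
compositions of `l` maps. -/
def levelSet (n : ℕ) : ℕ → Set ℝ
  | 0 => Icc 0 1
  | l + 1 => ⋃ k : Icc 1 n, S.g k '' levelSet n l

theorem mem_levelSet {l : ℕ} :
    x ∈ S.levelSet n l ↔ ∃ w, w.length = l ∧ IsWord n w ∧ x ∈ S.f w '' Icc 0 1 := by
  induction l generalizing x with
  | zero =>
    refine ⟨fun hx ↦ ⟨[], rfl, IsWord.nil n, x, hx, rfl⟩, ?_⟩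
    rintro ⟨w, hlen, -, hx⟩
    rwa [List.length_eq_zero_iff.1 hlen, f, wordComp, image_id] at hx
  | succ l ih =>
    rw [levelSet, mem_iUnion]
    constructor
    · rintro ⟨k, y, hy, rfl⟩
      obtain ⟨w, hlen, hw, z, hz, rfl⟩ := ih.1 hy
      exact ⟨k :: w, congrArg (· + 1) hlen, IsWord.cons_iff.2 ⟨k.2, hw⟩, z, hz, rfl⟩
    · rintro ⟨w, hlen, hw, z, hz, rfl⟩
      obtain ⟨k, v, rfl⟩ := List.exists_cons_of_length_eq_add_one hlen
      rw [IsWord.cons_iff] at hw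
      exact ⟨⟨k, hw.1⟩, S.f v z, ih.2 ⟨v, Nat.succ_injective hlen, hw.2, z, hz, rfl⟩, rfl⟩

theorem levelSet_antitone (n : ℕ) : Antitone (S.levelSet n) := by
  refine antitone_nat_of_succ_le fun l ↦ ?_
  induction l with
  | zero => exact iUnion_subset fun k ↦ (g_mapsTo k.2.1).image_subset
  | succ l ih => exact iUnion_mono fun k ↦ image_mono ih

theorem levelSet_subset_Icc (n l : ℕ) : S.levelSet n l ⊆ Icc 0 1 := levelSet_antitone n l.zero_le

theorem isCompact_levelSet (n l : ℕ) : IsCompact (S.levelSet n l) := by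
  induction l with
  | zero => exact isCompact_Icc
  | succ l ih =>
    exact isCompact_iUnion fun k ↦
      ih.image_of_continuousOn ((g_continuousOn k.2.1).mono (levelSet_subset_Icc n l))

variable (S) in
/-- The limit set `J_n`. -/
abbrev J (n : ℕ) : Set ℝ := limitSet S.g n

theorem J_eq_iInter_levelSet_succ (n : ℕ) : S.J n = ⋂ l, S.levelSet n (l + 1) := by
  ext x
  simp only [limitSet, mem_iInter, mem_iUnion, mem_ofPred_eq, exists_prop, and_assoc, mem_levelSet]
  rfl

theorem J_eq_iInter_levelSet (n : ℕ) : S.J n = ⋂ l, S.levelSet n l :=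
  (J_eq_iInter_levelSet_succ n).trans ((levelSet_antitone n).iInf_nat_add 1)

theorem J_subset_Icc : S.J n ⊆ Icc 0 1 := by
  rw [J_eq_iInter_levelSet]
  exact iInter_subset _ 0

theorem isCompact_J (n : ℕ) : IsCompact (S.J n) := by
  rw [J_eq_iInter_levelSet]
  exact (isCompact_levelSet n 0).of_isClosed_subset
    (isClosed_iInter fun l ↦ (isCompact_levelSet n l).isClosed) (iInter_subset _ 0)

theorem J_eq_iUnion_image (n : ℕ) : S.J n = ⋃ k : Icc 1 n, S.g k '' S.J n := by
  have image_J : ∀ k : Icc 1 n, S.g k '' S.J n = ⋂ l, S.g k '' S.levelSet n l := fun k ↦ by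
    rw [J_eq_iInter_levelSet]
    exact InjOn.image_iInter_eq
      ((S.g_anti k k.2.1).injOn.mono (iUnion_subset fun l ↦ levelSet_subset_Icc n l))
  rw [iUnion_congr image_J, J_eq_iInter_levelSet_succ]
  exact iInter_iUnion_of_antitone fun k l m hlm ↦ image_mono (levelSet_antitone n hlm)

theorem exists_g_eq_of_mem_J (hx : x ∈ S.J n) : ∃ k ∈ Icc 1 n, ∃ y ∈ S.J n, S.g k y = x := by
  rw [J_eq_iUnion_image, mem_iUnion] at hx
  obtain ⟨⟨k, hk⟩, hx⟩ := hx
  exact ⟨k, hk, hx⟩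

theorem g_mapsTo_J (hk : k ∈ Icc 1 n) : MapsTo (S.g k) (S.J n) (S.J n) := fun y hy ↦ by
  rw [J_eq_iUnion_image, mem_iUnion]
  exact ⟨⟨k, hk⟩, y, hy, rfl⟩

theorem f_mapsTo_J (hw : IsWord n w) : MapsTo (S.f w) (S.J n) (S.J n) := by
  induction w with
  | nil => exact mapsTo_id _
  | cons k w ih =>
    rw [IsWord.cons_iff] at hw
    exact (g_mapsTo_J hw.1).comp (ih hw.2)

theorem exists_f_eq_of_mem_J (l : ℕ) (hx : x ∈ S.J n) :
    ∃ w ∈ wordFinset n l, ∃ y ∈ S.J n, S.f w y = x := by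
  induction l generalizing x with
  | zero => exact ⟨[], mem_wordFinset.2 ⟨rfl, IsWord.nil n⟩, x, hx, rfl⟩
  | succ l ih =>
    obtain ⟨k, hk, y, hy, rfl⟩ := exists_g_eq_of_mem_J hx
    obtain ⟨w, hw, z, hz, rfl⟩ := ih hy
    rw [mem_wordFinset] at hw
    exact ⟨k :: w, mem_wordFinset.2 ⟨congrArg (· + 1) hw.1, IsWord.cons_iff.2 ⟨hk, hw.2⟩⟩, z, hz,
      rfl⟩

theorem b_le_of_mem_J (hx : x ∈ S.J n) : S.b n ≤ x := by
  obtain ⟨k, hk, y, hy, rfl⟩ := exists_g_eq_of_mem_J hx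
  exact (S.b_anti.antitone hk.2).trans (g_mapsTo_Icc_b hk.1 (J_subset_Icc hy)).1

theorem J_subset_Ioo : S.J n ⊆ Ioo 0 1 := by
  have pos : ∀ x ∈ S.J n, 0 < x := fun x hx ↦ (S.b_pos n).trans_le (b_le_of_mem_J hx)
  refine fun x hx ↦ ⟨pos x hx, ?_⟩
  obtain ⟨k, hk, y, hy, rfl⟩ := exists_g_eq_of_mem_J hx
  calc S.g k y < S.g k 0 :=
        S.g_anti k hk.1 unitInterval.zero_mem (J_subset_Icc hy) (pos y hy)
    _ ≤ 1 := (g_mapsTo hk.1 unitInterval.zero_mem).2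

theorem g_mapsTo_J_Ioo (hk : 1 ≤ k) : MapsTo (S.g k) (S.J n) (Ioo (S.b k) (S.b (k - 1))) := by
  intro y hy
  have := J_subset_Ioo hy
  rw [← S.g_one k hk, ← S.g_zero k hk]
  exact ⟨S.g_anti k hk (J_subset_Icc hy) unitInterval.one_mem this.2,
    S.g_anti k hk unitInterval.zero_mem (J_subset_Icc hy) this.1⟩

theorem eq_of_g_eq (hk : 1 ≤ k) (hj : 1 ≤ j) (hx : x ∈ S.J n) (hy : y ∈ S.J n)
    (h : S.g k x = S.g j y) : k = j := by
  have hkx := g_mapsTo_J_Ioo hk hx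
  have hjy := g_mapsTo_J_Ioo hj hy
  rw [← h] at hjy
  have : j - 1 < k := S.b_anti.lt_iff_gt.1 (hkx.1.trans hjy.2)
  have : k - 1 < j := S.b_anti.lt_iff_gt.1 (hjy.1.trans hkx.2)
  lia

theorem eq_of_f_eq (hlen : w.length = v.length) (hw : IsWord n w) (hv : IsWord n v)
    (hx : x ∈ S.J n) (hy : y ∈ S.J n) (h : S.f w x = S.f v y) : w = v := by
  induction w generalizing v with
  | nil => exact (List.length_eq_zero_iff.1 hlen.symm).symm
  | cons k w ih =>
    obtain ⟨j, v, rfl⟩ := List.exists_cons_of_length_eq_add_one hlen.symm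
    rw [IsWord.cons_iff] at hw hv
    have hwx := f_mapsTo_J hw.2 hx
    have hvy := f_mapsTo_J hv.2 hy
    obtain rfl : k = j := eq_of_g_eq hw.1.1 hv.1.1 hwx hvy h
    have tail_eq : S.f w x = S.f v y :=
      (S.g_anti k hw.1.1).injOn (J_subset_Icc hwx) (J_subset_Icc hvy) h
    rw [ih (Nat.succ_injective hlen) hw.2 hv.2 tail_eq]

theorem disjoint_g_image_J (hk : 1 ≤ k) (hj : 1 ≤ j) (hkj : k ≠ j) :
    Disjoint (S.g k '' S.J n) (S.g j '' S.J n) := by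
  rw [Set.disjoint_left]
  rintro _ ⟨x, hx, rfl⟩ ⟨y, hy, h⟩
  exact hkj (eq_of_g_eq hk hj hx hy h.symm)

theorem disjoint_f_image_J (hlen : w.length = v.length) (hw : IsWord n w) (hv : IsWord n v)
    (hwv : w ≠ v) : Disjoint (S.f w '' S.J n) (S.f v '' S.J n) := by
  rw [Set.disjoint_left]
  rintro _ ⟨x, hx, rfl⟩ ⟨y, hy, h⟩
  exact hwv (eq_of_f_eq hlen hw hv hx hy h.symm)

theorem f_continuousOn_J (hw : IsWord n w) : ContinuousOn (S.f w) (S.J n) :=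
  (f_continuousOn hw).mono J_subset_Icc

end LimitSet

section CylinderLength

variable {n : ℕ} {w : List ℕ} {p q x y κ : ℝ}

variable (S) in
/-- The length of the cylinder interval `f_w [0,1]`. -/
def len (w : List ℕ) : ℝ := |S.f w 0 - S.f w 1|

theorem abs_f_sub_le_abs_f_sub (hw : IsWord n w) (hp : p ∈ Icc (0 : ℝ) 1) (hq : q ∈ Icc (0 : ℝ) 1)
    (hx : x ∈ uIcc p q) (hy : y ∈ uIcc p q) : |S.f w x - S.f w y| ≤ |S.f w p - S.f w q| := by
  have hmaps := mapsTo_uIcc_of_monotoneOn_or_antitoneOn (f_monotoneOn_or_antitoneOn (S := S) hw)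
    (uIcc_subset_Icc hp hq)
  rw [abs_sub_comm (S.f w x), abs_sub_comm (S.f w p)]
  exact abs_sub_le_of_uIcc_subset_uIcc (uIcc_subset_uIcc (hmaps hx) (hmaps hy))

theorem abs_f_sub_le_len (hw : IsWord n w) (hx : x ∈ Icc (0 : ℝ) 1) (hy : y ∈ Icc (0 : ℝ) 1) :
    |S.f w x - S.f w y| ≤ S.len w := by
  rw [← uIcc_of_le (zero_le_one' ℝ)] at hx hy
  exact abs_f_sub_le_abs_f_sub hw unitInterval.zero_mem unitInterval.one_mem hx hy

theorem abs_f_sub_pos (hw : IsWord n w) (hx : x ∈ Icc (0 : ℝ) 1) (hy : y ∈ Icc (0 : ℝ) 1)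
    (hxy : x ≠ y) : 0 < |S.f w x - S.f w y| :=
  abs_pos.2 (sub_ne_zero.2 ((f_injOn hw).ne hx hy hxy))

theorem len_nonneg (w : List ℕ) : 0 ≤ S.len w := abs_nonneg _

theorem len_pos (hw : IsWord n w) : 0 < S.len w :=
  abs_f_sub_pos hw unitInterval.zero_mem unitInterval.one_mem zero_ne_one

theorem len_le (hw : IsWord n w) : S.len w ≤ S.contractionRatio ^ w.length := by
  simpa [len] using abs_f_sub_le (S := S) hw unitInterval.zero_mem unitInterval.one_mem

theorem abs_f_sub_le_mul_len (hκ : DistortionOn (S.f w) (Icc 0 1) κ) (hx : x ∈ Icc (0 : ℝ) 1)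
    (hy : y ∈ Icc (0 : ℝ) 1) : |S.f w x - S.f w y| ≤ κ * S.len w * |x - y| := by
  simpa [Real.dist_eq, len, mul_assoc] using
    hκ x hx y hy 0 unitInterval.zero_mem 1 unitInterval.one_mem

theorem len_mul_le_mul_abs_f_sub (hκ : DistortionOn (S.f w) (Icc 0 1) κ) (hx : x ∈ Icc (0 : ℝ) 1)
    (hy : y ∈ Icc (0 : ℝ) 1) : S.len w * |x - y| ≤ κ * |S.f w x - S.f w y| := by
  simpa [Real.dist_eq, len] using
    hκ 0 unitInterval.zero_mem 1 unitInterval.one_mem x hx y hy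

end CylinderLength

section FinitePositiveMeasure

/-- The indices `n` for which `J_n` is a genuine Cantor set of positive dimension; all large `n`
are of this kind. -/
structure Admissible (S : NonlinearIFS) (n : ℕ) : Prop where
  two_le : 2 ≤ n
  h_pos : 0 < S.h n

variable {S : NonlinearIFS} {n : ℕ} {w : List ℕ}

theorem Admissible.dimH_J (hn : S.Admissible n) : dimH (S.J n) = ENNReal.ofReal (S.h n) :=
  S.h_dim n (one_le_two.trans hn.two_le)

theorem h_le_one (hn : 1 ≤ n) : S.h n ≤ 1 := by
  rw [← ENNReal.ofReal_le_one, ← S.h_dim n hn, ← Real.dimH_univ]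
  exact dimH_mono (subset_univ _)

theorem Admissible.h_le_one (hn : S.Admissible n) : S.h n ≤ 1 :=
  NonlinearIFS.h_le_one (one_le_two.trans hn.two_le)

theorem Admissible.J_nonempty (hn : S.Admissible n) : (S.J n).Nonempty := by
  refine nonempty_iff_ne_empty.2 fun h_empty ↦ ?_
  have := hn.dimH_J
  rw [h_empty, dimH_empty] at this
  exact (ENNReal.ofReal_pos.2 hn.h_pos).ne this

theorem ediam_f_image_J_le (hw : IsWord n w) :
    Metric.ediam (S.f w '' S.J n) ≤ ENNReal.ofReal (S.len w) := by
  refine Metric.ediam_le ?_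
  rintro _ ⟨x, hx, rfl⟩ _ ⟨y, hy, rfl⟩
  rw [edist_dist, Real.dist_eq]
  exact ENNReal.ofReal_le_ofReal (abs_f_sub_le_len hw (J_subset_Icc hx) (J_subset_Icc hy))

theorem sum_ediam_f_image_J_rpow_le {h : ℝ} (h0 : 0 ≤ h) (l : ℕ) :
    ∑ w : wordFinset n l, Metric.ediam (S.f w '' S.J n) ^ h ≤
      ENNReal.ofReal (∑ w ∈ wordFinset n l, S.len w ^ h) := by
  rw [ENNReal.ofReal_sum_of_nonneg fun w _ ↦ Real.rpow_nonneg (len_nonneg w) h,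
    ← Finset.sum_coe_sort (wordFinset n l) fun w ↦ ENNReal.ofReal (S.len w ^ h)]
  refine Finset.sum_le_sum fun w _ ↦ ?_
  rw [← ENNReal.ofReal_rpow_of_nonneg (len_nonneg _) h0]
  exact ENNReal.rpow_le_rpow (ediam_f_image_J_le (mem_wordFinset.1 w.2).2) h0

theorem hausdorffMeasure_J_le_of_sum_le {h B : ℝ} (h0 : 0 ≤ h)
    (hB : ∀ l, 1 ≤ l → ∑ w ∈ wordFinset n l, S.len w ^ h ≤ B) :
    μH[h] (S.J n) ≤ ENNReal.ofReal B := by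
  have mesh_tendsto :
      Tendsto (fun l : ℕ ↦ ENNReal.ofReal (S.contractionRatio ^ (l + 1))) atTop (𝓝 0) := by
    rw [← ENNReal.ofReal_zero]
    exact ENNReal.tendsto_ofReal ((tendsto_pow_atTop_nhds_zero_of_lt_one
      S.contractionRatio_pos.le S.contractionRatio_lt_one).comp (tendsto_add_atTop_nat 1))
  refine (Measure.hausdorffMeasure_le_liminf_sum (ι := fun l ↦ wordFinset n (l + 1)) h (S.J n) _
    mesh_tendsto (fun l w ↦ S.f w '' S.J n) (Eventually.of_forall fun l w ↦ ?_)
    (Eventually.of_forall fun l x hx ↦ ?_)).trans ?_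
  · obtain ⟨hlen, hw⟩ := mem_wordFinset.1 w.2
    refine (ediam_f_image_J_le hw).trans (ENNReal.ofReal_le_ofReal ?_)
    exact (len_le hw).trans_eq (congrArg _ hlen)
  · obtain ⟨w, hw, hx⟩ := exists_f_eq_of_mem_J (l + 1) hx
    exact mem_iUnion.2 ⟨⟨w, hw⟩, hx⟩
  · refine liminf_le_of_le (by isBoundedDefault) fun c hc ↦ ?_
    obtain ⟨l, hl⟩ := hc.exists
    exact hl.trans ((sum_ediam_f_image_J_rpow_le h0 (l + 1)).trans
      (ENNReal.ofReal_le_ofReal (hB (l + 1) l.succ_pos)))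

theorem nontrivial_wordFinset (hn : 2 ≤ n) {l : ℕ} (hl : 1 ≤ l) : Nontrivial (wordFinset n l) := by
  have replicate_mem : ∀ k ∈ Icc 1 n, List.replicate l k ∈ wordFinset n l := fun k hk ↦
    mem_wordFinset.2 ⟨List.length_replicate, fun i hi ↦ (List.eq_of_mem_replicate hi).symm ▸ hk⟩
  refine ⟨⟨_, replicate_mem 1 ⟨le_rfl, by lia⟩⟩, ⟨_, replicate_mem 2 ⟨one_le_two, hn⟩⟩, fun h ↦ ?_⟩
  have := List.replicate_right_injective (Nat.one_le_iff_ne_zero.1 hl) (Subtype.ext_iff.1 h)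
  lia

theorem Admissible.sum_len_div_rpow_le_one (hn : S.Admissible n) {l : ℕ} (hl : 1 ≤ l) :
    ∑ w ∈ wordFinset n l, (S.len w / S.distortionConst) ^ S.h n ≤ 1 := by
  have := nontrivial_wordFinset hn.two_le hl
  have is_word (w : wordFinset n l) : IsWord n w := (mem_wordFinset.1 w.2).2
  rw [← Finset.sum_coe_sort (wordFinset n l) fun w ↦ (S.len w / S.distortionConst) ^ S.h n]
  refine sum_rpow_le_one_of_dimH_le (f := fun w : wordFinset n l ↦ S.f w) (isCompact_J n)
    hn.J_nonempty (fun w ↦ f_mapsTo_J (is_word w)) (fun w ↦ f_continuousOn_J (is_word w))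
    (fun w v hwv ↦ ?_) (fun w ↦ div_pos (len_pos (is_word w)) S.distortionConst_pos)
    (fun w x hx y hy ↦ ?_) hn.h_pos hn.dimH_J.le
  · exact disjoint_f_image_J ((mem_wordFinset.1 w.2).1.trans (mem_wordFinset.1 v.2).1.symm)
      (is_word w) (is_word v) (Subtype.coe_ne_coe.2 hwv)
  · rw [div_mul_eq_mul_div, div_le_iff₀' S.distortionConst_pos]
    exact len_mul_le_mul_abs_f_sub (distortionOn_f (is_word w)) (J_subset_Icc hx) (J_subset_Icc hy)

theorem Admissible.hausdorffMeasure_J_lt_top (hn : S.Admissible n) : μH[S.h n] (S.J n) < ⊤ := by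
  refine (hausdorffMeasure_J_le_of_sum_le (B := S.distortionConst ^ S.h n) hn.h_pos.le
    fun l hl ↦ ?_).trans_lt ENNReal.ofReal_lt_top
  have sum_le := hn.sum_len_div_rpow_le_one hl
  simp only [Real.div_rpow (len_nonneg _) S.distortionConst_pos.le, ← Finset.sum_div] at sum_le
  rwa [div_le_one (Real.rpow_pos_of_pos S.distortionConst_pos _)] at sum_le

theorem exists_inter_J_subset_f_concat_image {U : Set ℝ} {d δ : ℝ} (hne : (S.J n).Nonempty)
    (hδ : ∀ i j : Icc 1 n, i ≠ j → ∀ x ∈ S.g i '' S.J n, ∀ y ∈ S.g j '' S.J n, δ ≤ dist x y)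
    (hU : ∀ x ∈ U, ∀ y ∈ U, dist x y ≤ d) (hw : IsWord n w) (hUw : U ∩ S.J n ⊆ S.f w '' S.J n)
    (hd : S.distortionConst * d < S.len w * δ) :
    ∃ k ∈ Icc 1 n, U ∩ S.J n ⊆ S.f (w ++ [k]) '' S.J n := by
  suffices ∃ k ∈ Icc 1 n, ∀ y ∈ S.J n, S.f w y ∈ U → y ∈ S.g k '' S.J n by
    obtain ⟨k, hk, h⟩ := this
    refine ⟨k, hk, fun x hx ↦ ?_⟩
    obtain ⟨y, hy, rfl⟩ := hUw hx
    rw [f_concat, image_comp]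
    exact mem_image_of_mem _ (h y hy hx.1)
  by_cases! h_meets : ∃ y ∈ S.J n, S.f w y ∈ U
  · obtain ⟨x, hx, hxU⟩ := h_meets
    obtain ⟨k, hk, hxk⟩ := exists_g_eq_of_mem_J hx
    refine ⟨k, hk, fun y hy hyU ↦ ?_⟩
    obtain ⟨j, hj, hyj⟩ := exists_g_eq_of_mem_J hy
    obtain rfl : j = k := by
      by_contra hjk
      refine hd.not_ge ?_
      calc S.len w * δ ≤ S.len w * |x - y| :=
            mul_le_mul_of_nonneg_left
              (hδ ⟨k, hk⟩ ⟨j, hj⟩ (fun h ↦ hjk (Subtype.ext_iff.1 h).symm) x hxk y hyj)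
              (len_nonneg w)
        _ ≤ S.distortionConst * |S.f w x - S.f w y| :=
            len_mul_le_mul_abs_f_sub (distortionOn_f hw) (J_subset_Icc hx) (J_subset_Icc hy)
        _ ≤ S.distortionConst * d :=
            mul_le_mul_of_nonneg_left (hU _ hxU _ hyU) S.distortionConst_pos.le
    exact hyj
  · obtain ⟨x, hx⟩ := hne
    obtain ⟨k, hk, -⟩ := exists_g_eq_of_mem_J hx
    exact ⟨k, hk, fun y hy hyU ↦ absurd hyU (h_meets y hy)⟩

theorem exists_inter_J_subset_f_image {U : Set ℝ} {d δ : ℝ} (hne : (S.J n).Nonempty)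
    (hδ0 : 0 < δ)
    (hδ : ∀ i j : Icc 1 n, i ≠ j → ∀ x ∈ S.g i '' S.J n, ∀ y ∈ S.g j '' S.J n, δ ≤ dist x y)
    (hd0 : 0 < d) (hU : ∀ x ∈ U, ∀ y ∈ U, dist x y ≤ d) :
    ∃ w, IsWord n w ∧ U ∩ S.J n ⊆ S.f w '' S.J n ∧ S.len w * δ ≤ S.distortionConst * d := by
  by_contra! h_large
  have exists_of_length (m : ℕ) :
      ∃ w, w.length = m ∧ IsWord n w ∧ U ∩ S.J n ⊆ S.f w '' S.J n := by
    induction m with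
    | zero => exact ⟨[], rfl, IsWord.nil n, fun x hx ↦ ⟨x, hx.2, rfl⟩⟩
    | succ m ih =>
      obtain ⟨w, hlen, hw, hUw⟩ := ih
      obtain ⟨k, hk, hUk⟩ :=
        exists_inter_J_subset_f_concat_image hne hδ hU hw hUw (h_large w hw hUw)
      exact ⟨w ++ [k], by rw [List.length_append, hlen, List.length_singleton], hw.concat hk, hUk⟩
  obtain ⟨m, hm⟩ := exists_pow_lt_of_lt_one
    (div_pos (mul_pos S.distortionConst_pos hd0) hδ0) S.contractionRatio_lt_one
  obtain ⟨w, rfl, hw, hUw⟩ := exists_of_length m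
  exact (h_large w hw hUw).not_gt ((lt_div_iff₀ hδ0).1 ((len_le hw).trans_lt hm))

theorem Admissible.hausdorffMeasure_J_pos (hn : S.Admissible n) : 0 < μH[S.h n] (S.J n) := by
  obtain ⟨δ, hδ0, hδ⟩ := exists_gap_of_disjoint_compacts
    (A := fun k : Icc 1 n ↦ S.g k '' S.J n)
    (fun k ↦ (isCompact_J n).image_of_continuousOn ((g_continuousOn k.2.1).mono J_subset_Icc))
    (fun k j hkj ↦ disjoint_g_image_J k.2.1 j.2.1 (Subtype.coe_ne_coe.2 hkj))
  have hK := S.distortionConst_pos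
  refine hausdorffMeasure_pos_of_le_dimH (C := S.distortionConst * (S.distortionConst / δ))
    (isCompact_J n) (by positivity) (fun U d hd0 hU ↦ ?_) hn.h_pos hn.dimH_J.ge
  obtain ⟨w, hw, hUw, hlen⟩ := exists_inter_J_subset_f_image hn.J_nonempty hδ0 hδ hd0 hU
  refine ⟨S.f w, fun x hx y hy ↦ ?_, hUw⟩
  calc |S.f w x - S.f w y| ≤ S.distortionConst * S.len w * |x - y| :=
        abs_f_sub_le_mul_len (distortionOn_f hw) (J_subset_Icc hx) (J_subset_Icc hy)
    _ ≤ S.distortionConst * (S.distortionConst / δ * d) * |x - y| := by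
        gcongr
        rwa [div_mul_eq_mul_div, le_div_iff₀ hδ0]
    _ = S.distortionConst * (S.distortionConst / δ) * d * |x - y| := by ring

end FinitePositiveMeasure

section LimitMeasure

variable {S : NonlinearIFS} {n : ℕ} {w : List ℕ} {A B : Set ℝ}

variable (S) in
/-- The Hausdorff measure of dimension `h_n` restricted to `J_n`. -/
def limitMeasure (n : ℕ) : Measure ℝ := μH[S.h n].restrict (S.J n)

variable (S) in
/-- The number `H_{h_n}(J_n)`; the junk value `0` of an infinite measure does not occur for
admissible `n`. -/
def totalMass (n : ℕ) : ℝ := (S.limitMeasure n).real (S.J n)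

theorem limitMeasure_apply_of_subset (hA : A ⊆ S.J n) : S.limitMeasure n A = μH[S.h n] A := by
  rw [limitMeasure, Measure.restrict_eq_self _ hA]

theorem Admissible.isFiniteMeasure (hn : S.Admissible n) : IsFiniteMeasure (S.limitMeasure n) :=
  ⟨by simpa [limitMeasure] using hn.hausdorffMeasure_J_lt_top⟩

theorem Admissible.ofReal_totalMass (hn : S.Admissible n) :
    ENNReal.ofReal (S.totalMass n) = μH[S.h n] (S.J n) := by
  have := hn.isFiniteMeasure
  rw [totalMass, ofReal_measureReal, limitMeasure_apply_of_subset subset_rfl]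

theorem Admissible.totalMass_pos (hn : S.Admissible n) : 0 < S.totalMass n := by
  rw [← ENNReal.ofReal_pos, hn.ofReal_totalMass]
  exact hn.hausdorffMeasure_J_pos

theorem Admissible.measureReal_le_totalMass (hn : S.Admissible n) (A : Set ℝ) :
    (S.limitMeasure n).real A ≤ S.totalMass n := by
  have := hn.isFiniteMeasure
  refine (measureReal_mono (subset_univ A)).trans_eq ?_
  simp only [totalMass, limitMeasure, measureReal_def, Measure.restrict_apply_univ,
    Measure.restrict_apply_self]

theorem Admissible.measureReal_le_rpow_mul_measureReal (hn : S.Admissible n) {f : ℝ → ℝ} {c : ℝ}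
    (hA : A ⊆ S.J n) (hB : B ⊆ S.J n) (hBA : B ⊆ f '' A) (hc : 0 ≤ c)
    (hf : ∀ x ∈ A, ∀ y ∈ A, |f x - f y| ≤ c * |x - y|) :
    (S.limitMeasure n).real B ≤ c ^ S.h n * (S.limitMeasure n).real A := by
  have := hn.isFiniteMeasure
  have h_lipschitz : LipschitzOnWith c.toNNReal f A :=
    LipschitzOnWith.of_dist_le_mul fun x hx y hy ↦ by
      rw [Real.coe_toNNReal _ hc]
      exact hf x hx y hy
  have measure_le :=
    (measure_mono hBA).trans (h_lipschitz.hausdorffMeasure_image_le hn.h_pos.le)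
  rw [← limitMeasure_apply_of_subset hA, ← limitMeasure_apply_of_subset hB] at measure_le
  have measureReal_le := ENNReal.toReal_mono (ENNReal.mul_ne_top
    (ENNReal.rpow_ne_top_of_nonneg hn.h_pos.le ENNReal.coe_ne_top) (measure_ne_top _ _)) measure_le
  rwa [ENNReal.toReal_mul, ← ENNReal.toReal_rpow, ENNReal.coe_toReal, Real.coe_toNNReal _ hc]
    at measureReal_le

theorem Admissible.measureReal_f_image_le (hn : S.Admissible n) {κ : ℝ} (hw : IsWord n w)
    (hκ0 : 0 ≤ κ) (hκ : DistortionOn (S.f w) (Icc 0 1) κ) (hA : A ⊆ S.J n) :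
    (S.limitMeasure n).real (S.f w '' A) ≤
      (κ * S.len w) ^ S.h n * (S.limitMeasure n).real A :=
  hn.measureReal_le_rpow_mul_measureReal hA ((f_mapsTo_J hw).mono_left hA).image_subset subset_rfl
    (mul_nonneg hκ0 (len_nonneg w)) fun _ hx _ hy ↦
      abs_f_sub_le_mul_len hκ (J_subset_Icc (hA hx)) (J_subset_Icc (hA hy))

theorem Admissible.rpow_mul_totalMass_le_measureReal_f_image (hn : S.Admissible n) {κ : ℝ}
    (hw : IsWord n w) (hκ0 : 0 < κ) (hκ : DistortionOn (S.f w) (Icc 0 1) κ) :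
    (S.len w / κ) ^ S.h n * S.totalMass n ≤ (S.limitMeasure n).real (S.f w '' S.J n) := by
  have hlen := S.len_pos hw
  have invFunOn_f : LeftInvOn (Function.invFunOn (S.f w) (Icc 0 1)) (S.f w) (S.J n) :=
    (f_injOn hw).leftInvOn_invFunOn.mono J_subset_Icc
  have totalMass_le : S.totalMass n ≤
      (κ / S.len w) ^ S.h n * (S.limitMeasure n).real (S.f w '' S.J n) := by
    refine hn.measureReal_le_rpow_mul_measureReal (f_mapsTo_J hw).image_subset subset_rfl
      invFunOn_f.image_image.superset (by positivity) ?_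
    rintro _ ⟨x, hx, rfl⟩ _ ⟨y, hy, rfl⟩
    rw [invFunOn_f hx, invFunOn_f hy, div_mul_eq_mul_div, le_div_iff₀' hlen]
    exact len_mul_le_mul_abs_f_sub hκ (J_subset_Icc hx) (J_subset_Icc hy)
  rwa [← inv_div, Real.inv_rpow (by positivity), inv_mul_le_iff₀ (by positivity)]

end LimitMeasure

section FirstLevelPieces

variable {S : NonlinearIFS} {n : ℕ} {w : List ℕ}

theorem len_concat (w : List ℕ) (i : ℕ) :
    S.len (w ++ [i + 1]) = |S.f w (S.b i) - S.f w (S.b (i + 1))| := by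
  rw [len, f_concat, Function.comp_apply, Function.comp_apply, S.g_zero _ (Nat.le_add_left 1 i),
    S.g_one _ (Nat.le_add_left 1 i), Nat.add_sub_cancel]

theorem sum_Ico_len_concat (hw : IsWord n w) {i j : ℕ} (hij : i ≤ j) :
    ∑ k ∈ Finset.Ico i j, S.len (w ++ [k + 1]) = |S.f w (S.b i) - S.f w (S.b j)| := by
  simp only [len_concat]
  exact sum_Ico_abs_sub_of_monotoneOn_or_antitoneOn (f_monotoneOn_or_antitoneOn hw)
    S.b_anti.antitone S.b_mem_Icc hij

theorem len_concat_le (hw : IsWord n w) (i : ℕ) : S.len (w ++ [i + 1]) ≤ S.len w := by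
  rw [len_concat]
  exact abs_f_sub_le_len hw (S.b_mem_Icc i) (S.b_mem_Icc (i + 1))

theorem abs_f_zero_sub_f_b_le (hw : IsWord n w) (k : ℕ) :
    |S.f w 0 - S.f w (S.b k)| ≤ S.distortionConst * S.len w * S.b k := by
  simpa only [zero_sub, abs_neg, abs_of_pos (S.b_pos k)] using
    abs_f_sub_le_mul_len (distortionOn_f hw) unitInterval.zero_mem (S.b_mem_Icc k)

theorem len_mul_b_le (hw : IsWord n w) (k : ℕ) :
    S.len w * S.b k ≤ S.distortionConst * |S.f w 0 - S.f w (S.b k)| := by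
  simpa only [zero_sub, abs_neg, abs_of_pos (S.b_pos k)] using
    len_mul_le_mul_abs_f_sub (distortionOn_f hw) unitInterval.zero_mem (S.b_mem_Icc k)

theorem f_image_J_eq_biUnion (w : List ℕ) :
    S.f w '' S.J n = ⋃ i ∈ Finset.range n, S.f (w ++ [i + 1]) '' S.J n := by
  ext x
  simp only [mem_iUnion, exists_prop, Finset.mem_range, f_concat, image_comp]
  constructor
  · rintro ⟨y, hy, rfl⟩
    obtain ⟨k, ⟨hk1, hkn⟩, hy⟩ := exists_g_eq_of_mem_J hy
    refine ⟨k - 1, by lia, mem_image_of_mem _ ?_⟩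
    rwa [Nat.sub_add_cancel hk1]
  · rintro ⟨i, hi, y, hy, rfl⟩
    exact mem_image_of_mem _ ((g_mapsTo_J ⟨i.succ_pos, hi⟩).image_subset hy)

theorem Admissible.sum_measureReal_f_image_J (hn : S.Admissible n) {s : Finset (List ℕ)} {l : ℕ}
    (hs : ∀ w ∈ s, w.length = l ∧ IsWord n w) :
    ∑ w ∈ s, (S.limitMeasure n).real (S.f w '' S.J n) =
      (S.limitMeasure n).real (⋃ w ∈ s, S.f w '' S.J n) := by
  have := hn.isFiniteMeasure
  refine (measureReal_biUnion_finset (fun w hw v hv hwv ↦ ?_) fun w hw ↦ ?_).symm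
  · exact disjoint_f_image_J ((hs w hw).1.trans (hs v hv).1.symm) (hs w hw).2 (hs v hv).2 hwv
  · exact ((isCompact_J n).image_of_continuousOn (f_continuousOn_J (hs w hw).2)).measurableSet

theorem Admissible.measureReal_f_image_J_eq_sum (hn : S.Admissible n) (hw : IsWord n w) :
    (S.limitMeasure n).real (S.f w '' S.J n) =
      ∑ i ∈ Finset.range n, (S.limitMeasure n).real (S.f (w ++ [i + 1]) '' S.J n) := by
  have injOn : InjOn (fun i ↦ w ++ [i + 1]) (Finset.range n) := fun i _ j _ hij ↦ by simpa using hij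
  rw [← Finset.sum_image (f := fun v ↦ (S.limitMeasure n).real (S.f v '' S.J n)) injOn,
    hn.sum_measureReal_f_image_J (l := w.length + 1), Finset.set_biUnion_finset_image,
    f_image_J_eq_biUnion]
  simp only [Finset.mem_image, Finset.mem_range, forall_exists_index, and_imp]
  rintro _ i hi rfl
  exact ⟨by simp, hw.concat ⟨i.succ_pos, hi⟩⟩

end FirstLevelPieces

section UpperBound

variable {S : NonlinearIFS} {n N : ℕ} {w : List ℕ} {a κ : ℝ}

theorem Admissible.div_mul_len_rpow_le_measureReal (hn : S.Admissible n) (hw : IsWord n w)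
    (hκ1 : 1 ≤ κ) (hκ : DistortionOn (S.f w) (Icc 0 1) κ) :
    S.totalMass n / κ * S.len w ^ S.h n ≤ (S.limitMeasure n).real (S.f w '' S.J n) := by
  have hκ0 : 0 < κ := zero_lt_one.trans_le hκ1
  have hlen := len_nonneg (S := S) w
  have hmass := hn.totalMass_pos
  calc S.totalMass n / κ * S.len w ^ S.h n = S.len w ^ S.h n / κ * S.totalMass n := by ring
    _ ≤ S.len w ^ S.h n / κ ^ S.h n * S.totalMass n := by
        gcongr
        exact Real.rpow_le_self_of_one_le hκ1 hn.h_le_one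
    _ = (S.len w / κ) ^ S.h n * S.totalMass n := by rw [Real.div_rpow hlen hκ0.le]
    _ ≤ _ := hn.rpow_mul_totalMass_le_measureReal_f_image hw hκ0 hκ

theorem Admissible.rpow_mul_add_le_measureReal (hn : S.Admissible n) (hκ : 1 ≤ κ)
    (hN : S.HasTailDistortion N κ) (hNn : N ≤ n) (ha : 0 ≤ a)
    (density : ∀ w, IsWord n w → a * S.len w ^ S.h n ≤ (S.limitMeasure n).real (S.f w '' S.J n))
    (hw : IsWord n w) :
    S.len w ^ S.h n / S.len w * (a * |S.f w 1 - S.f w (S.b N)| +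
      S.totalMass n / κ * |S.f w (S.b N) - S.f w (S.b n)|) ≤
        (S.limitMeasure n).real (S.f w '' S.J n) := by
  have hmass := hn.totalMass_pos
  have len_rpow_le (i : ℕ) :
      S.len w ^ S.h n * (S.len (w ++ [i + 1]) / S.len w) ≤ S.len (w ++ [i + 1]) ^ S.h n :=
    rpow_mul_div_le_rpow (len_nonneg _) (len_pos hw) (len_concat_le hw i) hn.h_le_one
  rw [hn.measureReal_f_image_J_eq_sum hw, Finset.range_eq_Ico,
    ← Finset.sum_Ico_consecutive _ N.zero_le hNn, ← S.b_zero, ← sum_Ico_len_concat hw N.zero_le,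
    ← sum_Ico_len_concat hw hNn, mul_add, Finset.mul_sum, Finset.mul_sum, Finset.mul_sum,
    Finset.mul_sum]
  gcongr with i hi i hi
  all_goals rw [Finset.mem_Ico] at hi
  · calc _ = a * (S.len w ^ S.h n * (S.len (w ++ [i + 1]) / S.len w)) := by ring
      _ ≤ a * S.len (w ++ [i + 1]) ^ S.h n := by gcongr; exact len_rpow_le i
      _ ≤ _ := density _ (hw.concat ⟨i.succ_pos, hi.2.trans_le hNn⟩)
  · calc _ = S.totalMass n / κ * (S.len w ^ S.h n * (S.len (w ++ [i + 1]) / S.len w)) := by ring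
      _ ≤ S.totalMass n / κ * S.len (w ++ [i + 1]) ^ S.h n := by gcongr; exact len_rpow_le i
      _ ≤ _ := hn.div_mul_len_rpow_le_measureReal (hw.concat ⟨i.succ_pos, hi.2⟩) hκ
          (hN hw (Nat.lt_succ_of_le hi.1))

variable (S) in
/-- A lower bound for the proportion of `[0, b_N]` that lies above `b_n`, as seen after applying
any map of the system. -/
def coveredFraction (N n : ℕ) : ℝ := 1 - S.distortionConst ^ 2 * S.b n / S.b N

theorem coveredFraction_le_one (N n : ℕ) : S.coveredFraction N n ≤ 1 := by
  have := (S.b_pos n).le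
  have := (S.b_pos N).le
  exact sub_le_self _ (by positivity)

theorem convex_combination_mul_len_le (hNn : N ≤ n) {P : ℝ} (hP : 0 ≤ P) (haP : a ≤ P)
    (hw : IsWord n w) :
    ((1 - S.b N / S.distortionConst) * a +
      S.b N / S.distortionConst * (P * S.coveredFraction N n)) * S.len w ≤
        a * |S.f w 1 - S.f w (S.b N)| + P * |S.f w (S.b N) - S.f w (S.b n)| := by
  have hK := S.distortionConst_pos
  have hbN := S.b_pos N
  have hmono := f_monotoneOn_or_antitoneOn (S := S) hw
  have split_len : |S.f w 0 - S.f w (S.b N)| + |S.f w (S.b N) - S.f w 1| = S.len w :=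
    abs_sub_add_abs_sub_of_monotoneOn_or_antitoneOn hmono unitInterval.zero_mem
      (S.b_mem_Icc N) unitInterval.one_mem hbN.le (S.b_le_one N)
  have split_b := abs_sub_add_abs_sub_of_monotoneOn_or_antitoneOn hmono unitInterval.zero_mem
    (S.b_mem_Icc n) (S.b_mem_Icc N) (S.b_pos n).le (S.b_anti.antitone hNn)
  have proportion_le : S.b N / S.distortionConst * S.len w ≤ |S.f w 0 - S.f w (S.b N)| := by
    rw [div_mul_eq_mul_div, div_le_iff₀' hK, mul_comm (S.b N)]
    exact len_mul_b_le hw N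
  have gap_le := abs_f_zero_sub_f_b_le (S := S) hw n
  have fraction_eq : S.b N / S.distortionConst * S.coveredFraction N n =
      S.b N / S.distortionConst - S.distortionConst * S.b n := by
    rw [coveredFraction]
    field_simp
  rw [abs_sub_comm (S.f w 1), abs_sub_comm (S.f w (S.b N)) (S.f w (S.b n)), mul_left_comm _ P,
    fraction_eq, eq_sub_of_add_eq' split_len, eq_sub_of_add_eq' split_b]
  linarith [mul_nonneg (sub_nonneg.2 haP) (sub_nonneg.2 proportion_le),
    mul_nonneg hP (sub_nonneg.2 gap_le)]

theorem Admissible.density_le (hn : S.Admissible n) (hκ : 1 ≤ κ) (hN : S.HasTailDistortion N κ)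
    (hNn : N ≤ n) (hw : IsWord n w) :
    S.totalMass n / κ * S.coveredFraction N n ≤
      (S.limitMeasure n).real (S.f w '' S.J n) / S.len w ^ S.h n := by
  have hP : 0 ≤ S.totalMass n / κ := div_nonneg hn.totalMass_pos.le (zero_le_one.trans hκ)
  refine le_of_convex_step (a₀ := 0) (q := S.b N / S.distortionConst)
    (x := fun w : {w // IsWord n w} ↦ (S.limitMeasure n).real (S.f w '' S.J n) / S.len w ^ S.h n)
    (div_pos (S.b_pos N) S.distortionConst_pos)
    (mul_le_of_le_one_right hP (coveredFraction_le_one N n))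
    (fun w ↦ div_nonneg measureReal_nonneg (Real.rpow_nonneg (len_nonneg w.1) _))
    (fun a ha haP h_density v ↦ ?_) ⟨w, hw⟩
  have hlen := S.len_pos v.2
  rw [le_div_iff₀ (by positivity)]
  refine le_trans ?_ (hn.rpow_mul_add_le_measureReal hκ hN hNn ha
    (fun w hw ↦ (le_div_iff₀ (Real.rpow_pos_of_pos (len_pos hw) _)).1 (h_density ⟨w, hw⟩)) v.2)
  refine (le_of_eq ?_).trans (mul_le_mul_of_nonneg_left
    (convex_combination_mul_len_le hNn hP haP v.2) (by positivity))
  rw [mul_comm _ (S.len v), ← mul_assoc (_ / S.len v), div_mul_cancel₀ _ hlen.ne', mul_comm]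

theorem Admissible.totalMass_le (hn : S.Admissible n) (hκ : 1 ≤ κ) (hN : S.HasTailDistortion N κ)
    (hNn : N ≤ n) (h_fraction : 0 < S.coveredFraction N n) :
    S.totalMass n ≤ κ / S.coveredFraction N n := by
  have hκ0 : 0 < κ := zero_lt_one.trans_le hκ
  have hmass := hn.totalMass_pos
  rw [← ENNReal.ofReal_le_ofReal_iff (by positivity), hn.ofReal_totalMass]
  refine hausdorffMeasure_J_le_of_sum_le hn.h_pos.le fun l _ ↦ ?_
  have sum_le : S.totalMass n / κ * S.coveredFraction N n *
      ∑ w ∈ wordFinset n l, S.len w ^ S.h n ≤ S.totalMass n := by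
    calc _ = ∑ w ∈ wordFinset n l,
            S.totalMass n / κ * S.coveredFraction N n * S.len w ^ S.h n := Finset.mul_sum _ _ _
      _ ≤ ∑ w ∈ wordFinset n l, (S.limitMeasure n).real (S.f w '' S.J n) := by
          refine Finset.sum_le_sum fun w hw ↦ ?_
          have hw := (mem_wordFinset.1 hw).2
          rw [← le_div_iff₀ (Real.rpow_pos_of_pos (len_pos hw) _)]
          exact hn.density_le hκ hN hNn hw
      _ = _ := hn.sum_measureReal_f_image_J fun w ↦ mem_wordFinset.1
      _ ≤ S.totalMass n := hn.measureReal_le_totalMass _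
  rw [le_div_iff₀ h_fraction]
  refine le_of_mul_le_mul_left (a := S.totalMass n / κ) ?_ (by positivity)
  rw [div_mul_cancel₀ _ hκ0.ne']
  linarith

end UpperBound

section CardFactor

variable {S : NonlinearIFS} {n : ℕ} {w : List ℕ} {L : ℝ}

variable (S) in
/-- The factor `n ^ (1 - h_n)` lost in comparing a sum of `n` powers of exponent `h_n` with the
power of the sum; condition (N1) says that it tends to `1`. -/
def cardFactor (n : ℕ) : ℝ := (n : ℝ) ^ (1 - S.h n)

theorem Admissible.one_le_cardFactor (hn : S.Admissible n) : 1 ≤ S.cardFactor n :=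
  Real.one_le_rpow (by exact_mod_cast one_le_two.trans hn.two_le) (sub_nonneg.2 hn.h_le_one)

theorem Admissible.cardFactor_pos (hn : S.Admissible n) : 0 < S.cardFactor n :=
  zero_lt_one.trans_le hn.one_le_cardFactor

theorem Admissible.sum_rpow_le (hn : S.Admissible n) {s : Finset ℕ} (hs : s.card ≤ n) {x : ℕ → ℝ}
    (hx : ∀ i, 0 ≤ x i) (hL : ∑ i ∈ s, x i ≤ L) :
    ∑ i ∈ s, x i ^ S.h n ≤ S.cardFactor n * L ^ S.h n := by
  have sum_nonneg : 0 ≤ ∑ i ∈ s, x i := Finset.sum_nonneg fun i _ ↦ hx i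
  refine (sum_rpow_le_card_rpow_mul_rpow_sum s (fun i _ ↦ hx i) hn.h_pos hn.h_le_one).trans ?_
  have h1 := sub_nonneg.2 hn.h_le_one
  have h0 := hn.h_pos.le
  unfold cardFactor
  gcongr

theorem sum_Ico_len_concat_le (hw : IsWord n w) (a m : ℕ) :
    ∑ i ∈ Finset.Ico a m, S.len (w ++ [i + 1]) ≤ |S.f w 0 - S.f w (S.b a)| := by
  rcases le_total a m with ham | hma
  · rw [sum_Ico_len_concat hw ham, abs_sub_comm]
    refine abs_f_sub_le_abs_f_sub hw unitInterval.zero_mem (S.b_mem_Icc a) ?_ right_mem_uIcc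
    rw [uIcc_of_le (S.b_pos a).le]
    exact ⟨(S.b_pos m).le, S.b_anti.antitone ham⟩
  · rw [Finset.Ico_eq_empty_of_le hma, Finset.sum_empty]
    exact abs_nonneg _

end CardFactor

section IntervalPieces

variable {S : NonlinearIFS} {n i : ℕ} {w : List ℕ} {p q : ℝ}

variable (S) in
/-- The point of `[p, q]` nearest to `b_i`. -/
def clampB (p q : ℝ) (i : ℕ) : ℝ := max p (min (S.b i) q)

variable (S) in
/-- The part of `J_n` that `g_{i+1}` maps into `[p, q]`. -/
def piece (n : ℕ) (p q : ℝ) (i : ℕ) : Set ℝ := S.J n ∩ S.g (i + 1) ⁻¹' Icc p q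

variable (S) in
/-- The length of the image under `f_w` of the part of `[p, q]` between `b_{i+1}` and `b_i`. -/
def pieceLen (w : List ℕ) (p q : ℝ) (i : ℕ) : ℝ :=
  |S.f w (S.clampB p q i) - S.f w (S.clampB p q (i + 1))|

theorem clampB_antitone (p q : ℝ) : Antitone (S.clampB p q) := fun _ _ hij ↦
  max_le_max le_rfl (min_le_min (S.b_anti.antitone hij) le_rfl)

theorem clampB_mem_Icc (hpq : p ≤ q) (i : ℕ) : S.clampB p q i ∈ Icc p q :=
  ⟨le_max_left _ _, max_le hpq (min_le_right _ _)⟩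

theorem clampB_of_mem (hp : p ≤ S.b i) (hq : S.b i ≤ q) : S.clampB p q i = S.b i := by
  rw [clampB, min_eq_left hq, max_eq_right hp]

theorem clampB_of_le (hpq : p ≤ q) (hq : q ≤ S.b i) : S.clampB p q i = q := by
  rw [clampB, min_eq_right hq, max_eq_right hpq]

theorem clampB_of_ge (hp : S.b i ≤ p) : S.clampB p q i = p :=
  max_eq_left ((min_le_left _ _).trans hp)

theorem pieceLen_nonneg (w : List ℕ) (p q : ℝ) (i : ℕ) : 0 ≤ S.pieceLen w p q i := abs_nonneg _

theorem sum_Ico_pieceLen (hw : IsWord n w) (hp : 0 ≤ p) (hpq : p ≤ q) (hq : q ≤ 1) (m : ℕ) :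
    ∑ i ∈ Finset.Ico 0 m, S.pieceLen w p q i = |S.f w (S.clampB p q m) - S.f w q| := by
  have telescope := sum_Ico_abs_sub_of_monotoneOn_or_antitoneOn
    (f_monotoneOn_or_antitoneOn (S := S) hw) (clampB_antitone p q)
    (fun i ↦ Icc_subset_Icc hp hq (clampB_mem_Icc (S := S) hpq i)) m.zero_le
  rwa [clampB_of_le hpq (hq.trans_eq S.b_zero.symm), abs_sub_comm (S.f w q)] at telescope

theorem sum_Ico_pieceLen_le (hw : IsWord n w) (hp : 0 ≤ p) (hpq : p ≤ q) (hq : q ≤ 1) (m : ℕ) :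
    ∑ i ∈ Finset.Ico 0 m, S.pieceLen w p q i ≤ |S.f w p - S.f w q| := by
  rw [sum_Ico_pieceLen hw hp hpq hq]
  refine abs_f_sub_le_abs_f_sub hw ⟨hp, hpq.trans hq⟩ ⟨hp.trans hpq, hq⟩ ?_ right_mem_uIcc
  rw [uIcc_of_le hpq]
  exact clampB_mem_Icc hpq m

theorem lt_b_of_piece_nonempty (hne : (S.piece n p q i).Nonempty) : p < S.b i := by
  obtain ⟨y, hy, hpy, -⟩ := hne
  exact hpy.trans_lt (g_mapsTo_J_Ioo (Nat.le_add_left 1 i) hy).2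

theorem b_succ_lt_of_piece_nonempty (hne : (S.piece n p q i).Nonempty) : S.b (i + 1) < q := by
  obtain ⟨y, hy, -, hyq⟩ := hne
  exact (g_mapsTo_J_Ioo (Nat.le_add_left 1 i) hy).1.trans_le hyq

theorem clampB_mem_Icc_b (hp : p ≤ S.b i) (hq : S.b (i + 1) ≤ q) :
    S.clampB p q i ∈ Icc (S.b (i + 1)) (S.b i) ∧
      S.clampB p q (i + 1) ∈ Icc (S.b (i + 1)) (S.b i) := by
  have hb : S.b (i + 1) ≤ S.b i := S.b_anti.antitone i.le_succ
  exact ⟨⟨le_max_of_le_right (le_min hb hq), max_le hp (min_le_left _ _)⟩,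
    le_max_of_le_right (le_min le_rfl hq), max_le hp ((min_le_left _ _).trans hb)⟩

theorem exists_piece_subset_Icc (hne : (S.piece n p q i).Nonempty) :
    ∃ x ∈ Icc (0 : ℝ) 1, ∃ y ∈ Icc x 1, S.g (i + 1) x = S.clampB p q i ∧
      S.g (i + 1) y = S.clampB p q (i + 1) ∧ S.piece n p q i ⊆ S.J n ∩ Icc x y := by
  have hi : 1 ≤ i + 1 := Nat.le_add_left 1 i
  have h_anti := S.g_anti (i + 1) hi
  obtain ⟨mem, mem_succ⟩ := clampB_mem_Icc_b (lt_b_of_piece_nonempty hne).le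
    (b_succ_lt_of_piece_nonempty hne).le
  rw [← Nat.add_sub_cancel (n := i) (m := 1), Nat.sub_add_cancel hi, ← S.g_image _ hi]
    at mem mem_succ
  obtain ⟨x, hx, gx⟩ := mem
  obtain ⟨y, hy, gy⟩ := mem_succ
  have hxy : x ≤ y := by
    rw [← h_anti.le_iff_ge hy hx, gx, gy]
    exact clampB_antitone p q i.le_succ
  refine ⟨x, hx, y, ⟨hxy, hy.2⟩, gx, gy, fun z ⟨hz, hpz, hzq⟩ ↦ ⟨hz, ?_, ?_⟩⟩
  · rw [← h_anti.le_iff_ge (J_subset_Icc hz) hx, gx]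
    exact le_max_of_le_right (le_min (g_mapsTo_J_Ioo hi hz).2.le hzq)
  · rw [← h_anti.le_iff_ge hy (J_subset_Icc hz), gy]
    exact max_le hpz ((min_le_left _ _).trans (g_mapsTo_J_Ioo hi hz).1.le)

theorem f_image_inter_Icc_subset (w : List ℕ) (p q : ℝ) :
    S.f w '' (S.J n ∩ Icc p q) ⊆
      ⋃ i ∈ Finset.Ico 0 n, S.f (w ++ [i + 1]) '' S.piece n p q i := by
  rintro _ ⟨x, ⟨hx, hxpq⟩, rfl⟩
  obtain ⟨k, ⟨hk1, hkn⟩, y, hy, rfl⟩ := exists_g_eq_of_mem_J hx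
  obtain ⟨i, rfl⟩ := Nat.exists_eq_add_of_le' hk1
  simp only [mem_iUnion, Finset.mem_Ico, exists_prop, f_concat]
  exact ⟨i, ⟨i.zero_le, hkn⟩, y, ⟨hy, hxpq⟩, rfl⟩

theorem Admissible.measureReal_f_image_inter_Icc_le_sum (hn : S.Admissible n) (w : List ℕ)
    (p q : ℝ) : (S.limitMeasure n).real (S.f w '' (S.J n ∩ Icc p q)) ≤
      ∑ i ∈ Finset.Ico 0 n, (S.limitMeasure n).real (S.f (w ++ [i + 1]) '' S.piece n p q i) := by
  have := hn.isFiniteMeasure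
  exact (measureReal_mono (f_image_inter_Icc_subset w p q) (measure_ne_top _ _)).trans
    (measureReal_biUnion_finset_le _ _)

end IntervalPieces

section MassBounds

variable {S : NonlinearIFS} {n i : ℕ} {w : List ℕ} {p q A : ℝ}

variable (S) in
/-- The Hölder-type bound with constant `A` for the mass that `f_w` transports from `[p, q]`. -/
def MassBound (n : ℕ) (A : ℝ) (w : List ℕ) (p q : ℝ) : Prop :=
  (S.limitMeasure n).real (S.f w '' (S.J n ∩ Icc p q)) ≤ A * |S.f w p - S.f w q| ^ S.h n

variable (S) in
/-- The mass bound for all intervals with left endpoint `0`, uniformly over words. -/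
def LeftMassBound (n : ℕ) (A : ℝ) : Prop :=
  ∀ ⦃w⦄, IsWord n w → ∀ s ∈ Icc (0 : ℝ) 1, S.MassBound n A w 0 s

variable (S) in
/-- The mass bound for all intervals with right endpoint `1`, uniformly over words. -/
def RightMassBound (n : ℕ) (A : ℝ) : Prop :=
  ∀ ⦃w⦄, IsWord n w → ∀ s ∈ Icc (0 : ℝ) 1, S.MassBound n A w s 1

theorem MassBound.mono {A' : ℝ} (hA : S.MassBound n A w p q) (hAA' : A ≤ A') :
    S.MassBound n A' w p q :=
  hA.trans (mul_le_mul_of_nonneg_right hAA' (Real.rpow_nonneg (abs_nonneg _) _))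

theorem LeftMassBound.mono {A' : ℝ} (hA : S.LeftMassBound n A) (hAA' : A ≤ A') :
    S.LeftMassBound n A' := fun _ hw s hs ↦ (hA hw s hs).mono hAA'

theorem Admissible.massBound_self (hn : S.Admissible n) (A : ℝ) (w : List ℕ) (p : ℝ) :
    S.MassBound n A w p p := by
  have := Measure.nullSingletonClass_hausdorff ℝ hn.h_pos
  have null : S.limitMeasure n (S.f w '' (S.J n ∩ Icc p p)) = 0 := by
    have : (S.J n ∩ Icc p p).Subsingleton :=
      (Icc_self p ▸ subsingleton_singleton).anti inter_subset_right
    exact Measure.absolutelyContinuous_of_le Measure.restrict_le_self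
      ((this.image _).measure_zero _)
  rw [MassBound, measureReal_def, null, ENNReal.toReal_zero, sub_self, abs_zero,
    Real.zero_rpow hn.h_pos.ne', mul_zero]

theorem Admissible.measureReal_piece_le (hn : S.Admissible n) (hA : 0 ≤ A)
    (bound : (S.piece n p q i).Nonempty → ∀ x ∈ Icc (0 : ℝ) 1, ∀ y ∈ Icc x 1,
      S.g (i + 1) x = S.clampB p q i → S.g (i + 1) y = S.clampB p q (i + 1) →
        S.MassBound n A (w ++ [i + 1]) x y) :
    (S.limitMeasure n).real (S.f (w ++ [i + 1]) '' S.piece n p q i) ≤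
      A * S.pieceLen w p q i ^ S.h n := by
  have := hn.isFiniteMeasure
  rcases (S.piece n p q i).eq_empty_or_nonempty with empty | nonempty
  · rw [empty, image_empty, measureReal_empty]
    exact mul_nonneg hA (Real.rpow_nonneg (pieceLen_nonneg w p q i) _)
  · obtain ⟨x, hx, y, hy, gx, gy, subset⟩ := exists_piece_subset_Icc nonempty
    have mass_le := bound nonempty x hx y hy gx gy
    rw [MassBound, f_concat, Function.comp_apply, Function.comp_apply, gx, gy, ← f_concat]
      at mass_le
    exact (measureReal_mono (image_mono subset)).trans mass_le

theorem Admissible.measureReal_piece_le_of_b_le (hn : S.Admissible n) (hA : 0 ≤ A)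
    (left : S.LeftMassBound n A) (hw : IsWord n w) (hi : i < n) (hq : S.b i ≤ q) :
    (S.limitMeasure n).real (S.f (w ++ [i + 1]) '' S.piece n p q i) ≤
      A * S.pieceLen w p q i ^ S.h n := by
  refine hn.measureReal_piece_le hA fun hne x hx y hy gx _ ↦ ?_
  have hi1 : 1 ≤ i + 1 := Nat.le_add_left 1 i
  obtain rfl : x = 0 := by
    refine (S.g_anti _ hi1).injOn hx unitInterval.zero_mem ?_
    rw [gx, clampB_of_mem (lt_b_of_piece_nonempty hne).le hq, S.g_zero _ hi1, Nat.add_sub_cancel]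
  exact left (hw.concat ⟨hi1, hi⟩) y hy

theorem Admissible.measureReal_piece_le_of_le_b (hn : S.Admissible n) (hA : 0 ≤ A)
    (right : S.RightMassBound n A) (hw : IsWord n w) (hi : i < n) (hp : p ≤ S.b (i + 1)) :
    (S.limitMeasure n).real (S.f (w ++ [i + 1]) '' S.piece n p q i) ≤
      A * S.pieceLen w p q i ^ S.h n := by
  refine hn.measureReal_piece_le hA fun hne x hx y hy _ gy ↦ ?_
  have hi1 : 1 ≤ i + 1 := Nat.le_add_left 1 i
  obtain rfl : y = 1 := by
    refine (S.g_anti _ hi1).injOn ⟨hx.1.trans hy.1, hy.2⟩ unitInterval.one_mem ?_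
    rw [gy, clampB_of_mem hp (b_succ_lt_of_piece_nonempty hne).le, S.g_one _ hi1]
  exact right (hw.concat ⟨hi1, hi⟩) x hx

theorem Admissible.massBound_of_forall_piece (hn : S.Admissible n) (hA : 0 ≤ A) (hw : IsWord n w)
    (hp : 0 ≤ p) (hpq : p ≤ q) (hq : q ≤ 1)
    (bound : ∀ i < n, (S.limitMeasure n).real (S.f (w ++ [i + 1]) '' S.piece n p q i) ≤
      A * S.pieceLen w p q i ^ S.h n) :
    S.MassBound n (S.cardFactor n * A) w p q := by
  calc (S.limitMeasure n).real (S.f w '' (S.J n ∩ Icc p q))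
      ≤ ∑ i ∈ Finset.Ico 0 n, (S.limitMeasure n).real (S.f (w ++ [i + 1]) '' S.piece n p q i) :=
        hn.measureReal_f_image_inter_Icc_le_sum w p q
    _ ≤ ∑ i ∈ Finset.Ico 0 n, A * S.pieceLen w p q i ^ S.h n :=
        Finset.sum_le_sum fun i hi ↦ bound i (Finset.mem_Ico.1 hi).2
    _ ≤ A * (S.cardFactor n * |S.f w p - S.f w q| ^ S.h n) := by
        rw [← Finset.mul_sum]
        gcongr
        exact hn.sum_rpow_le (by simp) (pieceLen_nonneg w p q) (sum_Ico_pieceLen_le hw hp hpq hq n)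
    _ = S.cardFactor n * A * |S.f w p - S.f w q| ^ S.h n := by ring

theorem Admissible.rightMassBound (hn : S.Admissible n) (hA : 0 ≤ A)
    (left : S.LeftMassBound n A) : S.RightMassBound n (S.cardFactor n * A) := fun _ hw _ hs ↦
  hn.massBound_of_forall_piece hA hw hs.1 hs.2 le_rfl fun i hi ↦
    hn.measureReal_piece_le_of_b_le hA left hw hi (S.b_le_one i)

end MassBounds

section TailRegularity

variable {S : NonlinearIFS} {n N : ℕ} {w : List ℕ} {s t κ : ℝ}

variable (S) in
/-- From index `N` on, the system is within a factor `κ` of an affine one whose ratios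
`b_i / b_{i+1}` are `1`. -/
structure IsTailRegular (N : ℕ) (κ : ℝ) : Prop where
  one_le : 1 ≤ κ
  hasTailDistortion : S.HasTailDistortion N κ
  ratio_le : ∀ i, N ≤ i → 1 + S.distortionConst * (S.b i / S.b (i + 1) - 1) ≤ κ

variable (S) in
theorem exists_isTailRegular (hκ : 1 < κ) : ∃ N, S.IsTailRegular N κ := by
  have hK := S.distortionConst_pos
  obtain ⟨N₁, distortion_le⟩ := S.exists_hasTailDistortion hκ
  obtain ⟨N₂, ratio_le⟩ := S.exists_forall_b_div_b_succ_le (η := 1 + (κ - 1) / S.distortionConst)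
    (lt_add_of_pos_right _ (div_pos (sub_pos.2 hκ) hK))
  refine ⟨max N₁ N₂, hκ.le, fun n w k hw hk ↦ distortion_le hw ((le_max_left _ _).trans_lt hk),
    fun i hi ↦ ?_⟩
  have ratio_sub_le := sub_le_iff_le_add'.2 (ratio_le i ((le_max_right _ _).trans hi))
  rw [le_div_iff₀' hK] at ratio_sub_le
  linarith

theorem abs_f_zero_sub_f_le_mul (hw : IsWord n w) (hs : 0 < s) (hst : s ≤ t) (ht : t ≤ 1) :
    |S.f w 0 - S.f w t| ≤ (1 + S.distortionConst * (t / s - 1)) * |S.f w 0 - S.f w s| := by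
  have hs_mem : s ∈ Icc (0 : ℝ) 1 := ⟨hs.le, hst.trans ht⟩
  have ht_mem : t ∈ Icc (0 : ℝ) 1 := ⟨hs.le.trans hst, ht⟩
  have distortion_le :=
    distortionOn_f (S := S) hw s hs_mem t ht_mem 0 unitInterval.zero_mem s hs_mem
  simp only [Real.dist_eq, zero_sub, abs_neg, abs_of_pos hs, abs_sub_comm s t,
    abs_of_nonneg (sub_nonneg.2 hst)] at distortion_le
  rw [← abs_sub_add_abs_sub_of_monotoneOn_or_antitoneOn (f_monotoneOn_or_antitoneOn (S := S) hw)
    unitInterval.zero_mem hs_mem ht_mem hs.le hst, one_add_mul, add_le_add_iff_left]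
  refine le_of_mul_le_mul_right (distortion_le.trans_eq ?_) hs
  field_simp

theorem exists_b_succ_lt_le (hs0 : 0 < s) (hs1 : s ≤ 1) : ∃ i, S.b (i + 1) < s ∧ s ≤ S.b i := by
  by_contra! none
  have le_b (i : ℕ) : s ≤ S.b i := by
    induction i with
    | zero => rwa [S.b_zero]
    | succ i ih => exact not_lt.1 fun lt ↦ (none i lt).not_ge ih
  exact (ge_of_tendsto' S.b_lim le_b).not_gt hs0

end TailRegularity

section LeftIntervals

variable {S : NonlinearIFS} {n N : ℕ} {w : List ℕ} {s κ A : ℝ}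

theorem Admissible.measureReal_f_concat_image_le (hn : S.Admissible n)
    (hN : S.IsTailRegular N κ) (hw : IsWord n w) {i : ℕ} (hNi : N ≤ i) (hin : i < n) {E : Set ℝ}
    (hE : E ⊆ S.J n) :
    (S.limitMeasure n).real (S.f (w ++ [i + 1]) '' E) ≤
      κ * S.totalMass n * S.len (w ++ [i + 1]) ^ S.h n := by
  have hκ0 : 0 ≤ κ := zero_le_one.trans hN.one_le
  have hlen : 0 ≤ S.len (w ++ [i + 1]) := len_nonneg _
  calc (S.limitMeasure n).real (S.f (w ++ [i + 1]) '' E)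
      ≤ (κ * S.len (w ++ [i + 1])) ^ S.h n * (S.limitMeasure n).real E :=
        hn.measureReal_f_image_le (hw.concat ⟨i.succ_pos, hin⟩) hκ0
          (hN.hasTailDistortion hw (Nat.lt_succ_of_le hNi)) hE
    _ ≤ κ * S.len (w ++ [i + 1]) ^ S.h n * S.totalMass n := by
        rw [Real.mul_rpow hκ0 hlen]
        gcongr
        · exact Real.rpow_le_self_of_one_le hN.one_le hn.h_le_one
        · exact hn.measureReal_le_totalMass E
    _ = _ := by ring

theorem Admissible.sum_Ico_measureReal_piece_le (hn : S.Admissible n) (hN : S.IsTailRegular N κ)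
    (hw : IsWord n w) {a : ℕ} (hNa : N ≤ a) (p q : ℝ) :
    ∑ i ∈ Finset.Ico a n, (S.limitMeasure n).real (S.f (w ++ [i + 1]) '' S.piece n p q i) ≤
      S.cardFactor n * (κ * S.totalMass n) * |S.f w 0 - S.f w (S.b a)| ^ S.h n := by
  have hmass := hn.totalMass_pos
  have hκ0 : 0 ≤ κ := zero_le_one.trans hN.one_le
  calc _ ≤ ∑ i ∈ Finset.Ico a n, κ * S.totalMass n * S.len (w ++ [i + 1]) ^ S.h n := by
        refine Finset.sum_le_sum fun i hi ↦ ?_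
        obtain ⟨hai, hin⟩ := Finset.mem_Ico.1 hi
        exact hn.measureReal_f_concat_image_le hN hw (hNa.trans hai) hin inter_subset_left
    _ ≤ κ * S.totalMass n * (S.cardFactor n * |S.f w 0 - S.f w (S.b a)| ^ S.h n) := by
        rw [← Finset.mul_sum]
        gcongr
        exact hn.sum_rpow_le (by simp) (fun i ↦ len_nonneg _) (sum_Ico_len_concat_le hw a n)
    _ = _ := by ring

theorem Admissible.massBound_zero_of_lt_b (hn : S.Admissible n) (hN : S.IsTailRegular N κ)
    (hw : IsWord n w) (hs0 : 0 < s) (hs : s < S.b N) :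
    S.MassBound n (κ ^ 2 * S.cardFactor n * S.totalMass n) w 0 s := by
  have hmass := hn.totalMass_pos
  have hcard := hn.cardFactor_pos
  have hκ0 : 0 ≤ κ := zero_le_one.trans hN.one_le
  have h0 := hn.h_pos.le
  obtain ⟨j, b_lt, le_b⟩ := S.exists_b_succ_lt_le hs0 (hs.le.trans (S.b_le_one N))
  have hNj : N ≤ j := Nat.lt_succ_iff.1 (S.b_anti.lt_iff_gt.1 (b_lt.trans hs))
  have piece_eq_empty (i : ℕ) (hij : i < j) : S.piece n 0 s i = ∅ :=
    not_nonempty_iff_eq_empty.1 fun hne ↦ (le_b.trans (S.b_anti.antitone hij)).not_gt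
      (b_succ_lt_of_piece_nonempty hne)
  have f_b_le : |S.f w 0 - S.f w (S.b j)| ≤ κ * |S.f w 0 - S.f w s| := by
    refine (abs_f_zero_sub_f_le_mul hw hs0 le_b (S.b_le_one j)).trans ?_
    gcongr ?_ * _
    refine le_trans ?_ (hN.ratio_le j hNj)
    have hK := S.distortionConst_pos
    have hb := S.b_pos (j + 1)
    have hbj := S.b_pos j
    gcongr
  calc (S.limitMeasure n).real (S.f w '' (S.J n ∩ Icc 0 s))
      ≤ ∑ i ∈ Finset.Ico 0 n, (S.limitMeasure n).real (S.f (w ++ [i + 1]) '' S.piece n 0 s i) :=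
        hn.measureReal_f_image_inter_Icc_le_sum w 0 s
    _ = ∑ i ∈ Finset.Ico j n, (S.limitMeasure n).real (S.f (w ++ [i + 1]) '' S.piece n 0 s i) := by
        refine (Finset.sum_subset (Finset.Ico_subset_Ico_left j.zero_le) fun i hi hij ↦ ?_).symm
        simp only [Finset.mem_Ico] at hi hij
        rw [piece_eq_empty i (by lia), image_empty, measureReal_empty]
    _ ≤ S.cardFactor n * (κ * S.totalMass n) * (κ * |S.f w 0 - S.f w s|) ^ S.h n := by
        refine (hn.sum_Ico_measureReal_piece_le hN hw hNj 0 s).trans ?_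
        gcongr
    _ ≤ S.cardFactor n * (κ * S.totalMass n) * (κ * |S.f w 0 - S.f w s| ^ S.h n) := by
        rw [Real.mul_rpow hκ0 (abs_nonneg _)]
        gcongr
        exact Real.rpow_le_self_of_one_le hN.one_le hn.h_le_one
    _ = κ ^ 2 * S.cardFactor n * S.totalMass n * |S.f w 0 - S.f w s| ^ S.h n := by ring

theorem Admissible.sum_Ico_zero_measureReal_piece_le (hn : S.Admissible n) (hA : 0 ≤ A)
    (left : S.LeftMassBound n A) (hw : IsWord n w) (hNn : N ≤ n) (hs : S.b N ≤ s) (hs1 : s ≤ 1) :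
    ∑ i ∈ Finset.Ico 0 N, (S.limitMeasure n).real (S.f (w ++ [i + 1]) '' S.piece n 0 s i) ≤
      S.cardFactor n ^ 2 * A * |S.f w (S.b N) - S.f w s| ^ S.h n := by
  have hcard := hn.cardFactor_pos
  have hbN := S.b_pos N
  calc _ ≤ ∑ i ∈ Finset.Ico 0 N, S.cardFactor n * A * S.pieceLen w 0 s i ^ S.h n :=
        Finset.sum_le_sum fun i hi ↦ hn.measureReal_piece_le_of_le_b (by positivity)
          (hn.rightMassBound hA left) hw ((Finset.mem_Ico.1 hi).2.trans_le hNn) (S.b_pos _).le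
    _ ≤ S.cardFactor n * A * (S.cardFactor n * |S.f w (S.b N) - S.f w s| ^ S.h n) := by
        rw [← Finset.mul_sum]
        gcongr
        refine hn.sum_rpow_le (by simpa using hNn) (pieceLen_nonneg w 0 s) (le_of_eq ?_)
        rw [sum_Ico_pieceLen hw le_rfl (hbN.le.trans hs) hs1, clampB_of_mem hbN.le hs]
    _ = _ := by ring

theorem b_div_distortionConst_le (hw : IsWord n w) (hs : S.b N ≤ s) (hs1 : s ≤ 1) :
    S.b N / S.distortionConst ≤ |S.f w 0 - S.f w (S.b N)| / |S.f w 0 - S.f w s| := by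
  have hs0 : 0 < s := (S.b_pos N).trans_le hs
  have hs_mem : s ∈ Icc (0 : ℝ) 1 := ⟨hs0.le, hs1⟩
  rw [div_le_div_iff₀ S.distortionConst_pos
    (abs_f_sub_pos hw unitInterval.zero_mem hs_mem hs0.ne), mul_comm, mul_comm _ S.distortionConst]
  refine (mul_le_mul_of_nonneg_right ?_ (S.b_pos N).le).trans (len_mul_b_le hw N)
  exact abs_f_sub_le_len hw unitInterval.zero_mem hs_mem

theorem Admissible.massBound_zero_of_b_le (hn : S.Admissible n) (hN : S.IsTailRegular N κ)
    (hNn : N ≤ n) (hA : κ * S.totalMass n ≤ A) (left : S.LeftMassBound n A) (hw : IsWord n w)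
    (hs : S.b N ≤ s) (hs1 : s ≤ 1) :
    S.MassBound n (S.cardFactor n ^ 2 *
      (κ * S.totalMass n * (S.b N / S.distortionConst + (1 - S.h n)) +
        A * (1 - S.b N / S.distortionConst + (1 - S.h n)))) w 0 s := by
  have hcard := hn.one_le_cardFactor
  have hP : 0 ≤ κ * S.totalMass n := mul_nonneg (zero_le_one.trans hN.one_le) hn.totalMass_pos.le
  have hs0 : 0 < s := (S.b_pos N).trans_le hs
  have split := abs_sub_add_abs_sub_of_monotoneOn_or_antitoneOn
    (f_monotoneOn_or_antitoneOn (S := S) hw) unitInterval.zero_mem (S.b_mem_Icc N)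
    ⟨hs0.le, hs1⟩ (S.b_pos N).le hs
  have combine := mul_rpow_add_mul_rpow_le (abs_nonneg (S.f w 0 - S.f w (S.b N)))
    (abs_nonneg (S.f w (S.b N) - S.f w s))
    (split ▸ abs_f_sub_pos hw unitInterval.zero_mem ⟨hs0.le, hs1⟩ hs0.ne) hn.h_pos.le hn.h_le_one
    hP hA (split ▸ b_div_distortionConst_le hw hs hs1)
  rw [split] at combine
  calc (S.limitMeasure n).real (S.f w '' (S.J n ∩ Icc 0 s))
      ≤ ∑ i ∈ Finset.Ico 0 n, (S.limitMeasure n).real (S.f (w ++ [i + 1]) '' S.piece n 0 s i) :=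
        hn.measureReal_f_image_inter_Icc_le_sum w 0 s
    _ ≤ S.cardFactor n ^ 2 * A * |S.f w (S.b N) - S.f w s| ^ S.h n +
          S.cardFactor n * (κ * S.totalMass n) * |S.f w 0 - S.f w (S.b N)| ^ S.h n := by
        rw [← Finset.sum_Ico_consecutive _ N.zero_le hNn]
        exact add_le_add
          (hn.sum_Ico_zero_measureReal_piece_le (hP.trans hA) left hw hNn hs hs1)
          (hn.sum_Ico_measureReal_piece_le hN hw le_rfl 0 s)
    _ ≤ S.cardFactor n ^ 2 * A * |S.f w (S.b N) - S.f w s| ^ S.h n +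
          S.cardFactor n ^ 2 * (κ * S.totalMass n) * |S.f w 0 - S.f w (S.b N)| ^ S.h n := by
        gcongr
        exact le_self_pow₀ hcard two_ne_zero
    _ ≤ _ := by
        linarith [mul_le_mul_of_nonneg_left combine (sq_nonneg (S.cardFactor n))]

end LeftIntervals

section SelfImprovement

variable {S : NonlinearIFS} {n N : ℕ} {κ A : ℝ}

theorem Admissible.exists_leftMassBound (hn : S.Admissible n) : ∃ A, S.LeftMassBound n A := by
  have hmass := hn.totalMass_pos
  have hK := S.distortionConst_pos
  have hb := S.b_pos n
  have h0 := hn.h_pos.le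
  refine ⟨S.totalMass n * (S.distortionConst ^ 2 / S.b n) ^ S.h n, fun w hw s hs ↦ ?_⟩
  have hlen := len_nonneg (S := S) w
  rcases lt_or_ge s (S.b n) with s_lt | b_le
  · have empty : S.J n ∩ Icc 0 s = ∅ := eq_empty_of_forall_notMem fun x ⟨hx, _, hxs⟩ ↦
      (s_lt.trans_le (b_le_of_mem_J hx)).not_ge hxs
    rw [MassBound, empty, image_empty, measureReal_empty]
    positivity
  have len_le : S.distortionConst * S.len w ≤
      S.distortionConst ^ 2 / S.b n * |S.f w 0 - S.f w s| := by
    have monotone_len := abs_f_sub_le_abs_f_sub (S := S) hw unitInterval.zero_mem hs left_mem_uIcc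
      (uIcc_of_le hs.1 ▸ ⟨hb.le, b_le⟩ : S.b n ∈ uIcc 0 s)
    rw [div_mul_eq_mul_div, le_div_iff₀ hb, mul_assoc, sq, mul_assoc]
    gcongr S.distortionConst * ?_
    exact (len_mul_b_le hw n).trans (by gcongr)
  calc _ ≤ (S.distortionConst * S.len w) ^ S.h n * (S.limitMeasure n).real (S.J n ∩ Icc 0 s) :=
        hn.measureReal_f_image_le hw hK.le (distortionOn_f hw) inter_subset_left
    _ ≤ (S.distortionConst ^ 2 / S.b n * |S.f w 0 - S.f w s|) ^ S.h n * S.totalMass n := by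
        gcongr
        exact hn.measureReal_le_totalMass _
    _ = _ := by
        rw [Real.mul_rpow (by positivity) (abs_nonneg _)]
        ring

theorem Admissible.leftMassBound_iff (hn : S.Admissible n) :
    S.LeftMassBound n A ↔ ∀ x : {w // IsWord n w} × Ioc (0 : ℝ) 1,
      (S.limitMeasure n).real (S.f x.1 '' (S.J n ∩ Icc 0 x.2)) /
        |S.f x.1 0 - S.f x.1 x.2| ^ S.h n ≤ A := by
  have div_le {w : List ℕ} (hw : IsWord n w) {s : ℝ} (hs : s ∈ Ioc (0 : ℝ) 1) :
      (S.limitMeasure n).real (S.f w '' (S.J n ∩ Icc 0 s)) / |S.f w 0 - S.f w s| ^ S.h n ≤ A ↔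
        S.MassBound n A w 0 s :=
    div_le_iff₀ <| Real.rpow_pos_of_pos (abs_f_sub_pos hw unitInterval.zero_mem
      (Ioc_subset_Icc_self hs) hs.1.ne) _
  refine ⟨fun left x ↦ (div_le x.1.2 x.2.2).2 (left x.1.2 _ (Ioc_subset_Icc_self x.2.2)),
    fun bound w hw s hs ↦ ?_⟩
  rcases hs.1.eq_or_lt with rfl | hs0
  · exact hn.massBound_self A w 0
  · exact (div_le hw ⟨hs0, hs.2⟩).1 (bound ⟨⟨w, hw⟩, s, hs0, hs.2⟩)

variable (S) in
/-- The factor by which one subdivision step multiplies the constant of a left mass bound, up to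
an additive term. -/
def improvementRate (N n : ℕ) : ℝ :=
  S.cardFactor n ^ 2 * (1 - S.b N / S.distortionConst + (1 - S.h n))

variable (S) in
/-- The constant, relative to the total mass, of the left mass bound obtained by iterating the
subdivision step. -/
def massConst (N n : ℕ) (κ : ℝ) : ℝ :=
  max (κ ^ 2 * S.cardFactor n)
    (S.cardFactor n ^ 2 * (κ * (S.b N / S.distortionConst + (1 - S.h n))) /
      (1 - S.improvementRate N n))

theorem Admissible.leftMassBound (hn : S.Admissible n) (hN : S.IsTailRegular N κ) (hNn : N ≤ n)
    (rate_lt_one : S.improvementRate N n < 1) :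
    S.LeftMassBound n (S.massConst N n κ * S.totalMass n) := by
  have hmass := hn.totalMass_pos
  have hκ := hN.one_le
  have hcard := hn.one_le_cardFactor
  have base_le : κ * S.totalMass n ≤ κ ^ 2 * S.cardFactor n * S.totalMass n := by
    gcongr
    exact (le_self_pow₀ hκ two_ne_zero).trans (le_mul_of_one_le_right (by positivity) hcard)
  rw [massConst, max_mul_of_nonneg _ _ hmass.le, div_mul_eq_mul_div, hn.leftMassBound_iff]
  obtain ⟨A₀, left₀⟩ := hn.exists_leftMassBound
  refine le_max_of_affine_step ⟨A₀, forall_mem_range.2 (hn.leftMassBound_iff.1 left₀)⟩ base_le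
    rate_lt_one fun A hA bound ↦ hn.leftMassBound_iff.1 fun w hw s hs ↦ ?_
  rcases hs.1.eq_or_lt with rfl | hs0
  · exact hn.massBound_self _ w 0
  rcases lt_or_ge s (S.b N) with s_lt | b_le
  · exact (hn.massBound_zero_of_lt_b hN hw hs0 s_lt).mono (le_max_left _ _)
  · refine (hn.massBound_zero_of_b_le hN hNn hA (hn.leftMassBound_iff.2 bound) hw b_le hs.2).mono
      (le_max_of_le_right (le_of_eq ?_))
    rw [improvementRate]
    ring

end SelfImprovement

section AllIntervals

variable {S : NonlinearIFS} {n i : ℕ} {w : List ℕ} {p q A : ℝ}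

theorem piece_eq_empty_of_ne (hp : S.b (i + 1) ≤ p) (hq : q ≤ S.b i) {j : ℕ} (hji : j ≠ i) :
    S.piece n p q j = ∅ := by
  refine not_nonempty_iff_eq_empty.1 fun hne ↦ hji (le_antisymm ?_ ?_)
  · exact Nat.lt_succ_iff.1 (S.b_anti.lt_iff_gt.1 (hp.trans_lt (lt_b_of_piece_nonempty hne)))
  · exact Nat.lt_succ_iff.1 (S.b_anti.lt_iff_gt.1 ((b_succ_lt_of_piece_nonempty hne).trans_le hq))

theorem Admissible.massBound_of_subset_Icc_b (hn : S.Admissible n) (hA : 0 ≤ A) (hpq : p ≤ q)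
    (hi : i < n) (hp : S.b (i + 1) ≤ p) (hq : q ≤ S.b i)
    (bound : ∀ x ∈ Icc (0 : ℝ) 1, ∀ y ∈ Icc x 1, S.g (i + 1) x = q → S.g (i + 1) y = p →
      S.MassBound n A (w ++ [i + 1]) x y) :
    S.MassBound n A w p q := by
  have clamp := clampB_of_le hpq hq
  have clamp_succ := clampB_of_ge (q := q) hp
  calc (S.limitMeasure n).real (S.f w '' (S.J n ∩ Icc p q))
      ≤ ∑ j ∈ Finset.Ico 0 n, (S.limitMeasure n).real (S.f (w ++ [j + 1]) '' S.piece n p q j) :=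
        hn.measureReal_f_image_inter_Icc_le_sum w p q
    _ = (S.limitMeasure n).real (S.f (w ++ [i + 1]) '' S.piece n p q i) := by
        refine Finset.sum_eq_single_of_mem i (Finset.mem_Ico.2 ⟨i.zero_le, hi⟩) fun j _ hji ↦ ?_
        rw [piece_eq_empty_of_ne hp hq hji, image_empty, measureReal_empty]
    _ ≤ A * S.pieceLen w p q i ^ S.h n :=
        hn.measureReal_piece_le hA fun _ x hx y hy gx gy ↦
          bound x hx y hy (gx.trans clamp) (gy.trans clamp_succ)
    _ = A * |S.f w p - S.f w q| ^ S.h n := by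
        rw [pieceLen, clamp, clamp_succ, abs_sub_comm]

theorem Admissible.massBound_of_forall_not_subset_Icc_b (hn : S.Admissible n) (hA : 0 ≤ A)
    (left : S.LeftMassBound n A) (right : S.RightMassBound n A) (hw : IsWord n w) (hp : 0 ≤ p)
    (hpq : p ≤ q) (hq : q ≤ 1) (not_subset : ∀ i < n, S.b (i + 1) ≤ p → S.b i < q) :
    S.MassBound n (S.cardFactor n * A) w p q :=
  hn.massBound_of_forall_piece hA hw hp hpq hq fun i hi ↦ by
    rcases le_total p (S.b (i + 1)) with le_b | b_le
    · exact hn.measureReal_piece_le_of_le_b hA right hw hi le_b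
    · exact hn.measureReal_piece_le_of_b_le hA left hw hi (not_subset i hi b_le).le

/- An interval inside some `[b_{i+1}, b_i]` pulls back under `g_{i+1}` to a longer one, so after
finitely many steps it straddles some `b_i`. -/
theorem Admissible.massBound_of_pow_lt (hn : S.Admissible n) (hA : 0 ≤ A)
    (left : S.LeftMassBound n A) (right : S.RightMassBound n A) {m : ℕ} (hw : IsWord n w)
    (hp : 0 ≤ p) (hpq : S.contractionRatio ^ m < q - p) (hq : q ≤ 1) :
    S.MassBound n (S.cardFactor n * A) w p q := by
  have hα := S.contractionRatio_pos
  induction m generalizing w p q with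
  | zero => linarith [pow_zero S.contractionRatio]
  | succ m ih =>
    have p_le_q : p ≤ q := sub_nonneg.1 ((pow_nonneg hα.le _).trans hpq.le)
    by_cases subset : ∃ i < n, S.b (i + 1) ≤ p ∧ q ≤ S.b i
    · obtain ⟨i, hi, b_le, le_b⟩ := subset
      refine hn.massBound_of_subset_Icc_b (mul_nonneg hn.cardFactor_pos.le hA) p_le_q hi b_le le_b
        fun x hx y hy gx gy ↦ ih (hw.concat ⟨i.succ_pos, hi⟩) hx.1 ?_ hy.2
      have contract := S.abs_g_sub_le i.succ_pos hx ⟨hx.1.trans hy.1, hy.2⟩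
      rw [gx, gy, abs_of_nonneg (sub_nonneg.2 p_le_q), abs_sub_comm,
        abs_of_nonneg (sub_nonneg.2 hy.1)] at contract
      rw [pow_succ'] at hpq
      exact lt_of_mul_lt_mul_left (hpq.trans_le contract) hα.le
    · push Not at subset
      exact hn.massBound_of_forall_not_subset_Icc_b hA left right hw hp p_le_q hq subset

theorem Admissible.massBound (hn : S.Admissible n) (hA : 0 ≤ A) (left : S.LeftMassBound n A)
    (right : S.RightMassBound n A) (hw : IsWord n w) (hp : 0 ≤ p) (hpq : p ≤ q) (hq : q ≤ 1) :
    S.MassBound n (S.cardFactor n * A) w p q := by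
  rcases hpq.eq_or_lt with rfl | p_lt_q
  · exact hn.massBound_self _ w p
  · obtain ⟨m, hm⟩ := exists_pow_lt_of_lt_one (sub_pos.2 p_lt_q) S.contractionRatio_lt_one
    exact hn.massBound_of_pow_lt hA left right hw hp hm hq

theorem Admissible.one_le_of_forall_massBound (hn : S.Admissible n) (hA : 0 ≤ A)
    (bound : ∀ p q, 0 ≤ p → p ≤ q → q ≤ 1 → S.MassBound n A [] p q) : 1 ≤ A := by
  have := hn.isFiniteMeasure
  rw [← ENNReal.one_le_ofReal]
  refine one_le_of_forall_hausdorffMeasure_inter_Icc_le (isCompact_J n) hn.h_pos.le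
    hn.hausdorffMeasure_J_pos.ne' hn.hausdorffMeasure_J_lt_top.ne fun p hp q hq hpq ↦ ?_
  have mass_le := bound p q (J_subset_Icc hp).1 hpq (J_subset_Icc hq).2
  rw [MassBound, show S.f [] = id from rfl, image_id, id, id, abs_sub_comm,
    abs_of_nonneg (sub_nonneg.2 hpq)] at mass_le
  rw [← limitMeasure_apply_of_subset inter_subset_left, ← ofReal_measureReal,
    ENNReal.ofReal_rpow_of_nonneg (sub_nonneg.2 hpq) hn.h_pos.le, ← ENNReal.ofReal_mul hA]
  exact ENNReal.ofReal_le_ofReal mass_le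

theorem Admissible.one_le_massConst_mul_totalMass {N : ℕ} {κ : ℝ} (hn : S.Admissible n)
    (hN : S.IsTailRegular N κ) (hNn : N ≤ n) (rate_lt_one : S.improvementRate N n < 1) :
    1 ≤ S.cardFactor n ^ 2 * S.massConst N n κ * S.totalMass n := by
  have hcard := hn.one_le_cardFactor
  have hA : 0 ≤ S.massConst N n κ * S.totalMass n := mul_nonneg
    (le_max_of_le_left (mul_nonneg (sq_nonneg κ) hn.cardFactor_pos.le)) hn.totalMass_pos.le
  have left := hn.leftMassBound hN hNn rate_lt_one
  have hA' := hA.trans (le_mul_of_one_le_left hA hcard)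
  rw [pow_two, mul_assoc, mul_assoc]
  exact hn.one_le_of_forall_massBound (mul_nonneg hn.cardFactor_pos.le hA') fun p q hp hpq hq ↦
    hn.massBound hA' (left.mono (le_mul_of_one_le_left hA hcard)) (hn.rightMassBound hA left)
      (.nil n) hp hpq hq

end AllIntervals

section Asymptotics

variable (S : NonlinearIFS)

theorem tendsto_h : Tendsto S.h atTop (𝓝 1) := by
  have log_atTop : Tendsto (fun n : ℕ ↦ Real.log n) atTop atTop :=
    Real.tendsto_log_atTop.comp tendsto_natCast_atTop_atTop
  have one_sub_h : Tendsto (fun n ↦ 1 - S.h n) atTop (𝓝 0) := by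
    refine (S.N1.div_atTop log_atTop).congr' ?_
    filter_upwards [log_atTop.eventually_gt_atTop 0] with n hn
    exact mul_div_cancel_right₀ _ hn.ne'
  simpa using one_sub_h.const_sub 1

theorem tendsto_cardFactor : Tendsto S.cardFactor atTop (𝓝 1) := by
  have exp_tendsto := (Real.continuous_exp.tendsto 0).comp S.N1
  rw [Real.exp_zero] at exp_tendsto
  refine exp_tendsto.congr' ?_
  filter_upwards [eventually_gt_atTop 0] with n hn
  rw [Function.comp_apply, cardFactor, Real.rpow_def_of_pos (Nat.cast_pos.2 hn), mul_comm]

theorem eventually_admissible : ∀ᶠ n in atTop, S.Admissible n := by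
  filter_upwards [eventually_ge_atTop 2, S.tendsto_h.eventually_const_lt one_pos]
    with n two_le h_pos using ⟨two_le, h_pos⟩

theorem tendsto_coveredFraction (N : ℕ) : Tendsto (S.coveredFraction N) atTop (𝓝 1) := by
  unfold coveredFraction
  simpa using ((S.b_lim.const_mul (S.distortionConst ^ 2)).div_const (S.b N)).const_sub 1

theorem tendsto_improvementRate (N : ℕ) :
    Tendsto (S.improvementRate N) atTop (𝓝 (1 - S.b N / S.distortionConst)) := by
  unfold improvementRate
  simpa using (S.tendsto_cardFactor.pow 2).mul
    ((S.tendsto_h.const_sub 1).const_add (1 - S.b N / S.distortionConst))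

theorem tendsto_massConst (N : ℕ) {κ : ℝ} (hκ : 1 ≤ κ) :
    Tendsto (fun n ↦ S.massConst N n κ) atTop (𝓝 (κ ^ 2)) := by
  have ratio_ne : S.b N / S.distortionConst ≠ 0 := (div_pos (S.b_pos N) S.distortionConst_pos).ne'
  have base : Tendsto (fun n ↦ κ ^ 2 * S.cardFactor n) atTop (𝓝 (κ ^ 2)) := by
    simpa using S.tendsto_cardFactor.const_mul (κ ^ 2)
  have numerator : Tendsto (fun n ↦ S.cardFactor n ^ 2 *
      (κ * (S.b N / S.distortionConst + (1 - S.h n)))) atTop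
      (𝓝 (κ * (S.b N / S.distortionConst))) := by
    simpa using (S.tendsto_cardFactor.pow 2).mul
      (((S.tendsto_h.const_sub 1).const_add (S.b N / S.distortionConst)).const_mul κ)
  have denominator : Tendsto (fun n ↦ 1 - S.improvementRate N n) atTop
      (𝓝 (S.b N / S.distortionConst)) := by
    simpa using (S.tendsto_improvementRate N).const_sub 1
  have max_tendsto := base.max (numerator.div denominator ratio_ne)
  rwa [mul_div_cancel_right₀ _ ratio_ne, max_eq_left (le_self_pow₀ hκ two_ne_zero)] at max_tendsto

theorem eventually_totalMass_lt {c : ℝ} (hc : 1 < c) : ∀ᶠ n in atTop, S.totalMass n < c := by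
  obtain ⟨κ, one_lt_κ, κ_lt⟩ := exists_between hc
  obtain ⟨N, hN⟩ := S.exists_hasTailDistortion one_lt_κ
  have bound_tendsto : Tendsto (fun n ↦ κ / S.coveredFraction N n) atTop (𝓝 κ) := by
    simpa only [div_one] using!
      (tendsto_const_nhds (x := κ)).div (S.tendsto_coveredFraction N) one_ne_zero
  filter_upwards [S.eventually_admissible, eventually_ge_atTop N,
    (S.tendsto_coveredFraction N).eventually_const_lt one_pos,
    bound_tendsto.eventually_lt_const κ_lt] with n hn hNn fraction_pos bound_lt
  exact (hn.totalMass_le one_lt_κ.le hN hNn fraction_pos).trans_lt bound_lt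

theorem eventually_lt_totalMass {c : ℝ} (hc : c < 1) : ∀ᶠ n in atTop, c < S.totalMass n := by
  obtain ⟨κ, hκc, one_lt_κ⟩ : ∃ κ : ℝ, κ ^ 2 * c < 1 ∧ 1 < κ := by
    have continuous : ContinuousAt (fun κ : ℝ ↦ κ ^ 2 * c) 1 := by fun_prop
    have eventually_lt := continuous.eventually_lt_const (u := 1) (by simpa using hc)
    exact ((eventually_lt.filter_mono nhdsWithin_le_nhds).and self_mem_nhdsWithin).exists
      (f := 𝓝[>] (1 : ℝ))
  obtain ⟨N, hN⟩ := S.exists_isTailRegular one_lt_κ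
  have rate_lt_one : 1 - S.b N / S.distortionConst < 1 :=
    sub_lt_self _ (div_pos (S.b_pos N) S.distortionConst_pos)
  have const_tendsto : Tendsto (fun n ↦ S.cardFactor n ^ 2 * S.massConst N n κ) atTop
      (𝓝 (κ ^ 2)) := by
    simpa using (S.tendsto_cardFactor.pow 2).mul (S.tendsto_massConst N one_lt_κ.le)
  filter_upwards [S.eventually_admissible, eventually_ge_atTop N,
    (S.tendsto_improvementRate N).eventually_lt_const rate_lt_one,
    (const_tendsto.mul_const c).eventually_lt_const hκc,
    const_tendsto.eventually_const_lt (by positivity : 0 < κ ^ 2)]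
    with n hn hNn rate_lt const_mul_lt const_pos
  exact lt_of_mul_lt_mul_left
    (const_mul_lt.trans_le (hn.one_le_massConst_mul_totalMass hN hNn rate_lt)) const_pos.le

theorem tendsto_totalMass : Tendsto S.totalMass atTop (𝓝 1) :=
  tendsto_order.2 ⟨fun _ ↦ S.eventually_lt_totalMass, fun _ ↦ S.eventually_totalMass_lt⟩

end Asymptotics

end NonlinearIFS

/-- In the nonlinear setting, `lim_{n→∞} H_{h_n}(J_n) = 1`. -/
theorem nonlinear_hausdorff_measure_tendsto_one (S : NonlinearIFS) :
    Filter.Tendsto (fun n : ℕ => μH[S.h n] (limitSet S.g n)) Filter.atTop (nhds 1) := by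
  have ofReal_tendsto := ENNReal.tendsto_ofReal S.tendsto_totalMass
  rw [ENNReal.ofReal_one] at ofReal_tendsto
  refine ofReal_tendsto.congr' ?_
  filter_upwards [S.eventually_admissible] with n hn using hn.ofReal_totalMass
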